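/- For rational numbers x, y, z not all zero, the equation 2x⁴ + 4x²y² − 2xz³ + y⁴ = 0 holds if and only if y = 0 and (x = 0 or x = z). In particular, the only rational points on the plane projective quartic curve 2x⁴ + 4x²y² − 2xz³ + y⁴ = 0 are [0 : 0 : 1] and [1 : 0 : 1]. -/

import Mathlib

/-!
If `y = 0` the equation is `x (x³ - z³) = 0`, so suppose `y ≠ 0`; then `x ≠ 0`. Writing
`y / x = n / m` and `z / x = p / q` in lowest terms, the equation becomes
`2 p³ m⁴ = q³ (n⁴ + 4 n² m² + 2 m⁴)`, which forces `q³ = m⁴` or `q³ = 2 m⁴` (`affine`). The first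
possibility gives `t¹² + 8 t⁶ r² + 8 r⁴ = p³` (`caseA`), the second
`n⁴ + 64 n² μ⁶ + 512 μ¹² = p³` (`caseB`), with coprime nonzero unknowns and `t`, `n` odd. Both left
sides are norms `x² - 2 y²` with `x`, `y` coprime. The ring `ℤ[√2]` is Euclidean with fundamental
unit `ε = 1 + √2`, so `x + y √2 = ε ^ k (a + b √2)³` with `k = 0, 1, 2` (`norm_cube_coords`).

For `k = 1` and `k = 2` there are local contradictions, found from congruences together with the
quadratic characters of `-1` and `-2` modulo factors of the binary cubic forms which express `x`
and `y` through `a` and `b`.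

For `k = 0` in the first case, `t⁶ + 2 ϖ r² = w³` with `ϖ = 2 + √2`. Factoring out `w - t²` gives a
point on the elliptic curve `Y² = x (x² + 3 ϖ x + 3 ϖ²)` over `ℚ(√2)`. This curve has rank `0`:
a descent by the `2`-isogeny to `Y² = x (x² - 6 ϖ x - 3 ϖ²)` and back shows that only the classes
coming from torsion survive (`class_eq_one_pos`, `class_eq_one_neg`), which makes an infinite
descent possible (`quartic_descent`, `quartic_no_solution`).

For `k = 0` in the second case, the equation `μ⁶ = b (3 a² + 512 b²)` over `ℤ` reduces to
`g⁶ = a² + 2⁹ 3⁹ β¹²`. Splitting differences of squares and cubes into coprime factors repeatedly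
(`chain1` to `chain5`) ends in a nontrivial solution of `X³ + Y³ = Z³`, contradicting Fermat's last
theorem for the exponent `3`.
-/

namespace PlaneQuartic

local notation "R" => ℤ√2

/-! ### Arithmetic of `ℤ[√2]` -/

/-- `√2` in `ℤ[√2]`. -/
def θ : R := ⟨0, 1⟩

/-- The fundamental unit `1 + √2`. -/
def ε : R := ⟨1, 1⟩

/-- The totally positive element `2 + √2 = √2 · ε`, a generator of the prime above `2`. -/
def ϖ : R := ⟨2, 1⟩

lemma θ_sq : θ ^ 2 = 2 := by decide
lemma ε_eq : ε = 1 + θ := by decide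
lemma ϖ_eq : ϖ = 2 + θ := by decide

lemma eq_re_add_im (x : R) : x = (x.re : R) + (x.im : R) * θ := by
  ext <;> simp [θ]

lemma not_sq_two (n : ℤ) : (2 : ℤ) ≠ n * n := by
  intro h
  have h1 : n ≤ 1 := by nlinarith
  have h2 : -1 ≤ n := by nlinarith
  interval_cases n <;> omega

lemma norm_ne_zero {x : R} (hx : x ≠ 0) : x.norm ≠ 0 := by
  rwa [Ne, Zsqrtd.norm_eq_zero not_sq_two]

/-- Euclidean quotient: round both coordinates of the exact quotient in `ℚ(√2)`. -/
def quo (x y : R) : R :=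
  ⟨round ((x * star y).re / y.norm : ℚ), round ((x * star y).im / y.norm : ℚ)⟩

lemma natAbs_norm_rem_lt (x : R) {y : R} (hy : y ≠ 0) :
    (x - y * quo x y).norm.natAbs < y.norm.natAbs := by
  have hn : (y.norm : ℚ) ≠ 0 := by exact_mod_cast norm_ne_zero hy
  set a : ℚ := (x * star y).re / y.norm with ha
  set b : ℚ := (x * star y).im / y.norm with hb
  have hq : quo x y = ⟨round a, round b⟩ := rfl
  have e1 : |a - round a| ≤ 1 / 2 := abs_sub_round a
  have e2 : |b - round b| ≤ 1 / 2 := abs_sub_round b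
  have hnd : (y.norm : ℚ) = y.re * y.re - 2 * y.im * y.im := by
    simp [Zsqrtd.norm_def]
  have ha' : a * y.norm = x.re * y.re - 2 * x.im * y.im := by
    rw [ha, div_mul_cancel₀ _ hn]; simp; ring
  have hb' : b * y.norm = x.im * y.re - x.re * y.im := by
    rw [hb, div_mul_cancel₀ _ hn]; simp; ring
  have hx1 : (x.re : ℚ) = a * y.re + 2 * b * y.im := by
    apply mul_right_cancel₀ hn
    linear_combination (x.re : ℚ) * hnd - y.re * ha' - 2 * y.im * hb'
  have hx2 : (x.im : ℚ) = a * y.im + b * y.re := by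
    apply mul_right_cancel₀ hn
    linear_combination (x.im : ℚ) * hnd - y.im * ha' - y.re * hb'
  have key : ((x - y * quo x y).norm : ℚ)
      = y.norm * ((a - round a) ^ 2 - 2 * (b - round b) ^ 2) := by
    rw [hq, hnd]
    simp only [Zsqrtd.norm_def, Zsqrtd.re_sub, Zsqrtd.re_mul, Zsqrtd.im_sub, Zsqrtd.im_mul]
    push_cast
    rw [hx1, hx2]
    ring
  have e3 : |(a - round a) ^ 2 - 2 * (b - round b) ^ 2| < 1 := by
    rw [abs_le] at e1 e2
    rw [abs_lt]
    constructor <;> nlinarith [e1.1, e1.2, e2.1, e2.2]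
  have h : |((x - y * quo x y).norm : ℚ)| < |(y.norm : ℚ)| := by
    rw [key, abs_mul]
    exact mul_lt_of_lt_one_right (abs_pos.2 hn) e3
  have h' : |(x - y * quo x y).norm| < |y.norm| := by exact_mod_cast h
  rw [Int.abs_eq_natAbs, Int.abs_eq_natAbs] at h'
  exact_mod_cast h'

/-- `ℤ[√2]` is norm-Euclidean. -/
noncomputable instance instEuclideanDomain : EuclideanDomain R :=
  { (inferInstance : CommRing R), (inferInstance : Nontrivial R) with
    quotient := quo
    remainder := fun x y => x - y * quo x y
    quotient_zero := fun x => by simp [quo]; rfl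
    quotient_mul_add_remainder_eq := fun _ _ => by ring
    r := _
    r_wellFounded := (measure (Int.natAbs ∘ Zsqrtd.norm)).wf
    remainder_lt := fun x _ hy => natAbs_norm_rem_lt x hy
    mul_left_not_lt := fun a b hb => by
      change ¬ (a * b).norm.natAbs < a.norm.natAbs
      rw [not_lt]
      rw [Zsqrtd.norm_mul, Int.natAbs_mul]
      exact Nat.le_mul_of_pos_right _ (Int.natAbs_pos.2 (norm_ne_zero hb)) }

lemma two_ne : (2 : R) ≠ 0 := by decide
lemma θ_ne : θ ≠ 0 := by decide
lemma ϖ_ne : ϖ ≠ 0 := by decide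

lemma ϖ_eq_mul : ϖ = θ * ε := by decide
lemma ε_inv : ε * (θ - 1) = 1 := by decide

lemma ε_isUnit : IsUnit ε := IsUnit.of_mul_eq_one _ ε_inv

lemma even_or_odd (x : R) : θ ∣ x ∨ ∃ y, x = 1 + θ * y := by
  rcases Int.even_or_odd' x.re with ⟨k, hk | hk⟩
  · left
    refine ⟨⟨x.im, k⟩, ?_⟩
    ext <;> simp [θ, hk]
  · right
    refine ⟨⟨x.im, k⟩, ?_⟩
    ext <;> simp [θ, hk]; ring

lemma θ_not_dvd_one : ¬ θ ∣ 1 := by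
  rintro ⟨y, hy⟩
  have := congrArg Zsqrtd.re hy
  simp [θ] at this
  omega

lemma θ_not_dvd_odd (y : R) : ¬ θ ∣ 1 + θ * y := by
  intro h
  exact θ_not_dvd_one ((dvd_add_left (dvd_mul_right θ y)).1 h)

lemma θ_prime : Prime θ := by
  refine ⟨θ_ne, fun h => θ_not_dvd_one h.dvd, fun a b h => ?_⟩
  by_contra! hab
  obtain ⟨x, rfl⟩ := (even_or_odd a).resolve_left hab.1
  obtain ⟨y, rfl⟩ := (even_or_odd b).resolve_left hab.2
  exact θ_not_dvd_odd (x + y + θ * (x * y)) (by convert h using 1; ring)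

lemma three_prime : Prime (3 : R) := by
  have h3 : ∀ a : R, (3 : R) ∣ a ↔ (3 : ℤ) ∣ a.re ∧ (3 : ℤ) ∣ a.im := fun a => by
    exact_mod_cast Zsqrtd.intCast_dvd 3 a
  refine ⟨by decide, fun h => ?_, fun a b h => ?_⟩
  · have := (h3 1).1 h.dvd
    simp at this
  · rw [h3] at *
    rw [h3]
    simp only [Zsqrtd.re_mul, Zsqrtd.im_mul] at h
    simp only [Int.dvd_iff_emod_eq_zero] at *
    have key : ∀ p q r s : ZMod 3, p * r + 2 * q * s = 0 → p * s + q * r = 0 →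
      (p = 0 ∧ q = 0) ∨ (r = 0 ∧ s = 0) := by decide
    have e : ∀ z : ℤ, ((z : ℤ) : ZMod 3) = 0 ↔ z % 3 = 0 := fun z => by
      rw [← Int.dvd_iff_emod_eq_zero]; exact ZMod.intCast_zmod_eq_zero_iff_dvd z 3
    simp only [← e] at *
    push_cast at h
    exact key _ _ _ _ h.1 h.2

/-- The units of `ℤ[√2]` are the `±ε ^ n`, as an induction principle; a unit whose
`√2`-coordinate `b` is nonzero becomes one with smaller `|b|` on multiplication by
`ε` or by `ε⁻¹ = √2 - 1`, according to the signs of its coordinates. -/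
lemma unit_induction (P : R → Prop) (h1 : P 1) (h2 : P (-1)) (h3 : ∀ x, P x → P (ε * x))
    (h4 : ∀ x, P x → P ((θ - 1) * x)) {u : R} (hu : IsUnit u) : P u := by
  have main : ∀ n : ℕ, ∀ a b : ℤ, b.natAbs = n →
      (a ^ 2 - 2 * b ^ 2 = 1 ∨ a ^ 2 - 2 * b ^ 2 = -1) → P ⟨a, b⟩ := by
    intro n
    induction n using Nat.strong_induction_on with
    | _ n ih =>
    intro a b hn h
    by_cases hb : b = 0
    · subst hb
      have : a = 1 ∨ a = -1 := by
        have : a ^ 2 = 1 := by rcases h with h | h <;> nlinarith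
        simpa using this
      rcases this with rfl | rfl
      · exact h1
      · exact h2
    have hab : (a - b) ^ 2 < b ^ 2 ∨ (a + b) ^ 2 < b ^ 2 := by
      have hb' : 1 ≤ b ^ 2 := by
        have : 0 < b ^ 2 := by positivity
        omega
      rcases le_total 0 (a * b) with hs | hs
      · left
        by_contra! hc
        have h5 : 2 * (a * b) ≤ a ^ 2 := by nlinarith
        have h6 : 4 * (a * b) ^ 2 ≤ (a ^ 2) ^ 2 := by nlinarith
        have h7 : a ^ 2 * (a ^ 2 - 4 * b ^ 2) ≥ 0 := by nlinarith
        have h8 : 0 < a ^ 2 := by rcases h with h | h <;> nlinarith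
        have h9 : a ^ 2 ≥ 4 * b ^ 2 := by nlinarith
        rcases h with h | h <;> nlinarith
      · right
        by_contra! hc
        have h5 : 2 * (-(a * b)) ≤ a ^ 2 := by nlinarith
        have h6 : 4 * (a * b) ^ 2 ≤ (a ^ 2) ^ 2 := by nlinarith
        have h7 : a ^ 2 * (a ^ 2 - 4 * b ^ 2) ≥ 0 := by nlinarith
        have h8 : 0 < a ^ 2 := by rcases h with h | h <;> nlinarith
        have h9 : a ^ 2 ≥ 4 * b ^ 2 := by nlinarith
        rcases h with h | h <;> nlinarith
    rcases hab with hab | hab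
    · have := h3 _ (ih (a - b).natAbs (by rw [← hn]; exact Int.natAbs_lt_iff_sq_lt.2 hab)
        (-a + 2 * b) (a - b) rfl (by rcases h with h | h <;> [right; left] <;> nlinarith))
      convert this using 1
      ext <;> simp [ε] <;> ring
    · have := h4 _ (ih (a + b).natAbs (by rw [← hn]; exact Int.natAbs_lt_iff_sq_lt.2 hab)
        (a + 2 * b) (a + b) rfl (by rcases h with h | h <;> [right; left] <;> nlinarith))
      convert this using 1
      ext <;> simp [θ] <;> ring
  rw [Zsqrtd.isUnit_iff_norm_isUnit, Int.isUnit_iff, Zsqrtd.norm_def] at hu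
  exact main _ u.re u.im rfl (by rcases hu with h | h <;> [left; right] <;> linarith)

lemma unit_mod_cubes {u : R} (hu : IsUnit u) :
    ∃ v, u = v ^ 3 ∨ u = ε * v ^ 3 ∨ u = ε ^ 2 * v ^ 3 := by
  have hε : (θ - 1) * ε = 1 := by rw [mul_comm]; exact ε_inv
  refine unit_induction
    (fun u => ∃ v, u = v ^ 3 ∨ u = ε * v ^ 3 ∨ u = ε ^ 2 * v ^ 3)
    ⟨1, by simp⟩ ⟨-1, by left; norm_num⟩ ?_ ?_ hu
  · rintro x ⟨v, rfl | rfl | rfl⟩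
    · exact ⟨v, by simp⟩
    · exact ⟨v, by right; right; ring⟩
    · exact ⟨ε * v, by left; ring⟩
  · rintro x ⟨v, rfl | rfl | rfl⟩
    · refine ⟨(θ - 1) * v, Or.inr (Or.inr ?_)⟩
      linear_combination -(v ^ 3 * (θ - 1) * ((θ - 1) * ε + 1)) * hε
    · exact ⟨v, Or.inl (by linear_combination v ^ 3 * hε)⟩
    · exact ⟨v, Or.inr (Or.inl (by linear_combination ε * v ^ 3 * hε))⟩

lemma unit_mod_squares {u : R} (hu : IsUnit u) :
    ∃ v, u = v ^ 2 ∨ u = -v ^ 2 ∨ u = ε * v ^ 2 ∨ u = -(ε * v ^ 2) := by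
  have hε : (θ - 1) * ε = 1 := by rw [mul_comm]; exact ε_inv
  refine unit_induction
    (fun u => ∃ v, u = v ^ 2 ∨ u = -v ^ 2 ∨ u = ε * v ^ 2 ∨ u = -(ε * v ^ 2))
    ⟨1, by simp⟩ ⟨1, by simp⟩ ?_ ?_ hu
  · rintro x ⟨v, rfl | rfl | rfl | rfl⟩
    · exact ⟨v, by simp⟩
    · exact ⟨v, by right; right; right; ring⟩
    · exact ⟨ε * v, by left; ring⟩
    · exact ⟨ε * v, by right; left; ring⟩
  · rintro x ⟨v, rfl | rfl | rfl | rfl⟩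
    · exact ⟨(θ - 1) * v, Or.inr (Or.inr (Or.inl (by
        linear_combination -(v ^ 2 * (θ - 1)) * hε)))⟩
    · exact ⟨(θ - 1) * v, Or.inr (Or.inr (Or.inr (by
        linear_combination (v ^ 2 * (θ - 1)) * hε)))⟩
    · exact ⟨v, Or.inl (by linear_combination v ^ 2 * hε)⟩
    · exact ⟨v, Or.inr (Or.inl (by linear_combination -v ^ 2 * hε))⟩

/-! ### Two-descent on elliptic curves over `ℤ[√2]` -/

lemma not_dvd_of_isCoprime {p x y : R} (hp : Prime p) (h : IsCoprime x y) (hx : p ∣ x) :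
    ¬ p ∣ y := fun hy => hp.not_isUnit (h.isUnit_of_dvd' hx hy)

lemma dvd_θ_or_three {p : R} (hp : Prime p) (h : p ∣ 6) : p ∣ θ ∨ p ∣ 3 := by
  have : (6 : R) = θ ^ 2 * 3 := by rw [θ_sq]; norm_num
  rw [this] at h
  exact (hp.dvd_or_dvd h).imp_left hp.dvd_of_dvd_pow

lemma strip {p : R} (hp : Prime p) {x : R} (hx : x ≠ 0) :
    ∃ n y, x = p ^ n * y ∧ ¬ p ∣ y := by
  obtain ⟨n, y, hy, h⟩ := WfDvdMonoid.max_power_factor hx hp.irreducible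
  exact ⟨n, y, h, hy⟩

lemma pow_parity (p : R) (n : ℕ) : ∃ k, p ^ n = k ^ 2 ∨ p ^ n = p * k ^ 2 := by
  obtain ⟨m, hm | hm⟩ := Nat.even_or_odd' n
  · exact ⟨p ^ m, Or.inl (by rw [hm]; ring)⟩
  · exact ⟨p ^ m, Or.inr (by rw [hm]; ring)⟩

/-- If a product is a square and its two factors share no prime outside `6`, then each factor is
a square up to a unit and the primes `√2` and `3`. -/
lemma square_class {α β γ : R} (hα : α ≠ 0) (h : α * β = γ ^ 2)
    (hp : ∀ p, Prime p → p ∣ α → p ∣ β → p ∣ 6) :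
    ∃ s d t v, (s = 1 ∨ s = -1 ∨ s = ε ∨ s = -ε) ∧ (d = 1 ∨ d = θ) ∧ (t = 1 ∨ t = 3) ∧
      α = s * d * t * v ^ 2 := by
  obtain ⟨a, α₁, h1, h1'⟩ := strip θ_prime hα
  have hα₁ : α₁ ≠ 0 := by rintro rfl; simp at h1'
  obtain ⟨b, α₂, h2, h2'⟩ := strip three_prime hα₁
  have hα₂ : α₂ ≠ 0 := by rintro rfl; simp at h2'
  have hθ : ¬ θ ∣ α₂ := fun hd => h1' (h2 ▸ hd.mul_left _)
  have key : ∀ p, Prime p → p ∣ α₂ → ¬ (p ∣ θ ∨ p ∣ 3) := by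
    rintro p hp' hd (h3 | h3)
    · exact hθ (((hp'.dvd_prime_iff_associated θ_prime).1 h3).symm.dvd.trans hd)
    · exact h2' (((hp'.dvd_prime_iff_associated three_prime).1 h3).symm.dvd.trans hd)
  have hdα : α₂ ∣ α := h1 ▸ (h2 ▸ (Dvd.intro_left _ rfl)).mul_left _
  have hc : IsCoprime α₂ (θ ^ a * 3 ^ b * β) := by
    refine isCoprime_of_prime_dvd (fun h0 => hα₂ h0.1) fun p hp' hd hd' => ?_
    have := key p hp' hd
    rcases hp'.dvd_or_dvd hd' with h3 | h3
    · rcases hp'.dvd_or_dvd h3 with h3 | h3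
      · exact this (Or.inl (hp'.dvd_of_dvd_pow h3))
      · exact this (Or.inr (hp'.dvd_of_dvd_pow h3))
    · exact this (dvd_θ_or_three hp' (hp p hp' (hd.trans hdα) h3))
  obtain ⟨w, u, hu⟩ := exists_associated_pow_of_mul_eq_pow' hc
    (c := γ) (k := 2) (by rw [← h, h1, h2]; ring)
  obtain ⟨x, hx⟩ := unit_mod_squares u.isUnit
  have hs : ∃ s, (s = 1 ∨ s = -1 ∨ s = ε ∨ s = -ε) ∧ (u : R) = s * x ^ 2 := by
    rcases hx with hx | hx | hx | hx
    · exact ⟨1, by simp, by rw [hx]; ring⟩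
    · exact ⟨-1, by simp, by rw [hx]; ring⟩
    · exact ⟨ε, by simp, by rw [hx]⟩
    · exact ⟨-ε, by simp, by rw [hx]; ring⟩
  obtain ⟨s, hs, hus⟩ := hs
  have hd : ∃ d k, (d = 1 ∨ d = θ) ∧ θ ^ a = d * k ^ 2 := by
    obtain ⟨k, hk | hk⟩ := pow_parity θ a
    · exact ⟨1, k, by simp, by rw [hk]; ring⟩
    · exact ⟨θ, k, by simp, hk⟩
  have ht : ∃ t k, (t = 1 ∨ t = 3) ∧ (3 : R) ^ b = t * k ^ 2 := by
    obtain ⟨k, hk | hk⟩ := pow_parity 3 b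
    · exact ⟨1, k, by simp, by rw [hk]; ring⟩
    · exact ⟨3, k, by simp, hk⟩
  obtain ⟨d, k, hd, hdk⟩ := hd
  obtain ⟨t, l, ht, htl⟩ := ht
  refine ⟨s, d, t, k * l * w * x, hs, hd, ht, ?_⟩
  rw [h1, h2, ← hu, hus, hdk, htl]
  ring

/-- Reduction of a pair to coprime form. -/
lemma exists_coprime {x y : R} (hy : y ≠ 0) :
    ∃ g n m, g ≠ 0 ∧ x = g * n ∧ y = g * m ∧ IsCoprime n m := by
  have hg : EuclideanDomain.gcd x y ≠ 0 := fun h => hy (EuclideanDomain.gcd_eq_zero_iff.1 h).2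
  obtain ⟨n, hn⟩ := EuclideanDomain.gcd_dvd_left x y
  obtain ⟨m, hm⟩ := EuclideanDomain.gcd_dvd_right x y
  refine ⟨EuclideanDomain.gcd x y, n, m, hg, hn, hm, EuclideanDomain.gcdA x y,
    EuclideanDomain.gcdB x y, ?_⟩
  apply mul_left_cancel₀ hg
  linear_combination -EuclideanDomain.gcdA x y * hn - EuclideanDomain.gcdB x y * hm -
    EuclideanDomain.gcd_eq_gcd_ab x y

/-- A point `X / Z` in the square class of `e` on `Y² = x (x² + a x + b)` gives a point on the
corresponding `2`-covering, a quartic. -/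
lemma covering {a b X Z Y e u v : R} (hX : X ≠ 0) (hZ : Z ≠ 0) (hv : v ≠ 0)
    (h : X * Z * (X ^ 2 + a * X * Z + b * Z ^ 2) = Y ^ 2) (he : X * v ^ 2 = e * Z * u ^ 2) :
    ∃ N M s, IsCoprime N M ∧ N ≠ 0 ∧ M ≠ 0 ∧ X * M ^ 2 = e * Z * N ^ 2 ∧
      e * (e ^ 2 * N ^ 4 + a * e * N ^ 2 * M ^ 2 + b * M ^ 4) = s ^ 2 := by
  obtain ⟨g, N, M, hg, rfl, rfl, hc⟩ := exists_coprime (x := u) hv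
  have hM : M ≠ 0 := right_ne_zero_of_mul hv
  have h1 : X * M ^ 2 = e * Z * N ^ 2 := by
    apply mul_left_cancel₀ (pow_ne_zero 2 hg)
    linear_combination he
  have hN : N ≠ 0 := by
    rintro rfl
    simp [hX, hM] at h1
  have h2 : e * (e ^ 2 * N ^ 4 + a * e * N ^ 2 * M ^ 2 + b * M ^ 4) * (N * Z ^ 2) ^ 2 =
      (Y * M ^ 3) ^ 2 := by
    have : (Y * M ^ 3) ^ 2 = Z * (X * M ^ 2) * ((X * M ^ 2) ^ 2 + a * (X * M ^ 2) * (Z * M ^ 2) +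
      b * (Z * M ^ 2) ^ 2) := by linear_combination -M ^ 6 * h
    rw [this, h1]; ring
  have h0 : N * Z ^ 2 ≠ 0 := mul_ne_zero hN (pow_ne_zero 2 hZ)
  obtain ⟨s, hs⟩ := (IsIntegrallyClosed.pow_dvd_pow_iff (two_ne_zero)).1 (Dvd.intro_left _ h2)
  refine ⟨N, M, s, hc, hN, hM, h1, mul_right_cancel₀ (pow_ne_zero 2 h0) ?_⟩
  rw [h2, hs]; ring

/-- `e` is one of the eight elements `±1`, `±ε`, `±√2`, `±ε √2`, which represent the square
classes generated by the units and the prime `√2`. -/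
def IsClass (e : R) : Prop := ∃ s d,
  (s = 1 ∨ s = -1 ∨ s = ε ∨ s = -ε) ∧ (d = 1 ∨ d = θ) ∧ e = s * d

lemma six_dvd {p : R} (hp : Prime p) (h : p ∣ 3 * ϖ ^ 2) : p ∣ 6 := by
  have h6 : (6 : R) = θ ^ 2 * 3 := by rw [θ_sq]; norm_num
  rw [h6]
  rcases hp.dvd_or_dvd h with h | h
  · exact h.mul_left _
  · have := hp.dvd_of_dvd_pow h
    rw [ϖ_eq_mul] at this
    rcases hp.dvd_or_dvd this with h | h
    · exact (h.pow two_ne_zero).mul_right _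
    · exact absurd (isUnit_of_dvd_unit h ε_isUnit) hp.not_isUnit

/-- Two-descent via the `2`-isogeny on `Y² = x (x² + a x ± 3 ϖ²)`: after possibly translating by
the `2`-torsion point (`x ↦ b / x`), the square class of `x` is prime to `3`. -/
lemma two_descent {a b σ X Z Y : R} (hσ : σ = 1 ∨ σ = -1) (hb : b = σ * (3 * ϖ ^ 2))
    (hX : X ≠ 0) (hZ : Z ≠ 0)
    (h : X * Z * (X ^ 2 + a * X * Z + b * Z ^ 2) = Y ^ 2) :
    ∃ X' Z', ((X' = X ∧ Z' = Z) ∨ (X' = b * Z ∧ Z' = X)) ∧ ∃ e N M s, IsClass e ∧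
      IsCoprime N M ∧ N ≠ 0 ∧ M ≠ 0 ∧ X' * M ^ 2 = e * Z' * N ^ 2 ∧
      e * (e ^ 2 * N ^ 4 + a * e * N ^ 2 * M ^ 2 + b * M ^ 4) = s ^ 2 := by
  have hσ2 : σ ^ 2 = 1 := by rcases hσ with rfl | rfl <;> norm_num
  have hb0 : b ≠ 0 := by
    rw [hb]; rcases hσ with rfl | rfl <;> decide
  obtain ⟨g, x, z, hg, hx, hz, hc⟩ := exists_coprime (x := X) hZ
  have hx0 : x ≠ 0 := by rintro rfl; simp [hx] at hX
  have hz0 : z ≠ 0 := by rintro rfl; simp [hz] at hZ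
  have hY : (g ^ 2) ^ 2 ∣ Y ^ 2 :=
    ⟨x * z * (x ^ 2 + a * x * z + b * z ^ 2), by rw [← h, hx, hz]; ring⟩
  obtain ⟨y, hy⟩ := (IsIntegrallyClosed.pow_dvd_pow_iff (two_ne_zero)).1 hY
  have h1 : x * z * (x ^ 2 + a * x * z + b * z ^ 2) = y ^ 2 := by
    apply mul_left_cancel₀ (pow_ne_zero 4 hg)
    rw [hx, hz, hy] at h
    linear_combination h
  have hxz : x * z ≠ 0 := mul_ne_zero hx0 hz0
  obtain ⟨s, d, t, v, hs, hd, ht, hv⟩ := square_class hxz h1 fun p hp h2 h3 => by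
    rcases hp.dvd_or_dvd h2 with h2 | h2
    · have hz' := not_dvd_of_isCoprime hp hc h2
      have h4 : p ∣ b * z ^ 2 := by
        have := dvd_sub h3 (h2.mul_right (x + a * z))
        convert this using 1; ring
      have h5 := (hp.dvd_or_dvd h4).resolve_right fun h => hz' (hp.dvd_of_dvd_pow h)
      apply six_dvd hp
      have := h5.mul_left σ
      rw [hb] at this
      convert this using 1
      linear_combination -(3 * ϖ ^ 2) * hσ2
    · exfalso
      have h4 : p ∣ x ^ 2 := by
        have := dvd_sub h3 (h2.mul_right (a * x + b * z))
        convert this using 1; ring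
      exact not_dvd_of_isCoprime hp hc (hp.dvd_of_dvd_pow h4) h2
  have hv0 : v ≠ 0 := by rintro rfl; simp at hv; exact hxz (by simp [hv])
  rcases ht with rfl | rfl
  · obtain ⟨N, M, s', h2⟩ := covering (e := s * d) (u := v) hX hZ hz0 h
      (by rw [hx, hz]; linear_combination g * z * hv)
    exact ⟨X, Z, Or.inl ⟨rfl, rfl⟩, s * d, N, M, s', ⟨s, d, hs, hd, rfl⟩, h2⟩
  · have hs0 : s * d ≠ 0 := by
      intro h0; rw [h0] at hv; simp at hv; exact hxz (by simp [hv])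
    obtain ⟨N, M, s', h2⟩ := covering (a := a) (b := b) (X := b * Z) (Z := X) (Y := b * Y)
      (e := σ * s * d) (u := ϖ * z) (v := s * d * v)
      (mul_ne_zero hb0 hZ) hX (mul_ne_zero hs0 hv0) (by linear_combination b ^ 2 * h)
      (by rw [hx, hz, hb]; linear_combination -(σ * s * d * ϖ ^ 2 * g * z) * hv)
    refine ⟨b * Z, X, Or.inr ⟨rfl, rfl⟩, σ * s * d, N, M, s', ⟨σ * s, d, ?_, hd, rfl⟩, h2⟩
    rcases hσ with rfl | rfl <;> rcases hs with rfl | rfl | rfl | rfl <;> simp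

/-! ### The curve `Y² = x (x² + 3 ϖ x + 3 ϖ²)`: local conditions -/

/-- Reduction modulo `√2`. -/
def par : R →+* ZMod 2 := Zsqrtd.lift ⟨0, by decide⟩

lemma par_θ : par θ = 0 := by simp [par, θ]

lemma par_eq_zero {x : R} : par x = 0 ↔ θ ∣ x := by
  constructor
  · intro h
    refine (even_or_odd x).resolve_right ?_
    rintro ⟨y, rfl⟩
    simp [par_θ] at h
  · rintro ⟨y, rfl⟩
    simp [par_θ]

lemma par_eq_one {x : R} : par x = 1 ↔ ∃ y, x = 1 + θ * y := by
  constructor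
  · intro h
    refine (even_or_odd x).resolve_left fun h' => ?_
    rw [par_eq_zero.2 h'] at h
    exact absurd h (by decide)
  · rintro ⟨y, rfl⟩
    simp [par_θ]

lemma par_ε : par ε = 1 := by rw [ε_eq]; simp [par_θ]
lemma par_ϖ : par ϖ = 0 := by rw [ϖ_eq_mul]; simp [par_θ]

lemma par_zero_or_one (x : R) : par x = 0 ∨ par x = 1 := by
  generalize par x = y; revert y; decide

lemma par_coprime {N M : R} (h : IsCoprime N M) : par N = 1 ∨ par M = 1 := by
  by_contra! hc
  have h1 := (par_zero_or_one N).resolve_right hc.1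
  have h2 := (par_zero_or_one M).resolve_right hc.2
  exact not_dvd_of_isCoprime θ_prime h (par_eq_zero.1 h1) (par_eq_zero.1 h2)

/-- An element of odd valuation at `√2` is not a square. -/
lemma sq_ne_odd_pow {W s : R} (k : ℕ) (hW : par W = 1) : θ ^ (2 * k + 1) * W ≠ s ^ 2 := by
  induction k generalizing s with
  | zero =>
    intro h
    have h1 : θ ∣ s := θ_prime.dvd_of_dvd_pow ⟨W, by rw [← h]; ring⟩
    obtain ⟨t, rfl⟩ := h1
    have : W = θ * t ^ 2 := mul_left_cancel₀ θ_ne (by linear_combination h)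
    rw [this] at hW
    simp [par_θ] at hW
  | succ k ih =>
    intro h
    have h1 : θ ∣ s := θ_prime.dvd_of_dvd_pow ⟨θ ^ (2 * k + 2) * W, by rw [← h]; ring⟩
    obtain ⟨t, rfl⟩ := h1
    exact ih (s := t) (mul_left_cancel₀ (pow_ne_zero 2 θ_ne) (by linear_combination h))

/-- The squares modulo `4`: a square is even, or congruent to `1` or to `ε² = 3 + 2√2`. -/
lemma sq_mod_four (s : R) :
    (∃ j, s ^ 2 = 2 * j) ∨ ∃ j, s ^ 2 = 1 + 4 * j ∨ s ^ 2 = 3 + 2 * θ + 4 * j := by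
  rcases even_or_odd s with ⟨y, rfl⟩ | ⟨y, rfl⟩
  · exact Or.inl ⟨y ^ 2, by linear_combination y ^ 2 * θ_sq⟩
  · right
    rcases even_or_odd y with ⟨k, rfl⟩ | ⟨k, rfl⟩
    · exact ⟨k + k ^ 2, Or.inl (by linear_combination (2 * k + k ^ 2 * (θ ^ 2 + 2)) * θ_sq)⟩
    · exact ⟨k + θ * k + k ^ 2, Or.inr (by
        linear_combination (2 * k + (1 + 2 * θ * k) + k ^ 2 * (θ ^ 2 + 2)) * θ_sq)⟩

lemma sq_mod_two {s : R} (h : par s = 1) : ∃ j, s ^ 2 = 1 + 2 * j := by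
  obtain ⟨y, rfl⟩ := par_eq_one.1 h
  exact ⟨θ * y + y ^ 2, by linear_combination y ^ 2 * θ_sq⟩

lemma pow_four_mod_four {s : R} (h : par s = 1) : ∃ j, s ^ 4 = 1 + 4 * j := by
  obtain ⟨j, hj⟩ := sq_mod_two h
  exact ⟨j + j ^ 2, by rw [show s ^ 4 = (s ^ 2) ^ 2 by ring, hj]; ring⟩

lemma sq_ne_three {s k : R} : s ^ 2 ≠ 3 + 4 * k := by
  intro h
  rcases sq_mod_four s with ⟨j, hj⟩ | ⟨j, hj | hj⟩ <;> rw [hj] at h <;>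
    have h1 := congrArg Zsqrtd.re h <;> have h2 := congrArg Zsqrtd.im h <;>
    simp [θ] at h1 h2 <;> omega

lemma sq_ne_one_add {s k : R} : s ^ 2 ≠ 1 + 2 * θ + 4 * k := by
  intro h
  rcases sq_mod_four s with ⟨j, hj⟩ | ⟨j, hj | hj⟩ <;> rw [hj] at h <;>
    have h1 := congrArg Zsqrtd.re h <;> have h2 := congrArg Zsqrtd.im h <;>
    simp [θ] at h1 h2 <;> omega

/-- The embedding `√2 ↦ √2` of `ℤ[√2]` in `ℝ`. -/
noncomputable def emb₁ : R →+* ℝ := Zsqrtd.lift ⟨√2, by simp⟩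

/-- The embedding `√2 ↦ -√2` of `ℤ[√2]` in `ℝ`. -/
noncomputable def emb₂ : R →+* ℝ := Zsqrtd.lift ⟨-√2, by simp⟩

lemma emb₁_injective : Function.Injective emb₁ := Zsqrtd.lift_injective _ not_sq_two
lemma emb₂_injective : Function.Injective emb₂ := Zsqrtd.lift_injective _ not_sq_two

/-- In an embedding where `ϖ` is positive the quadratic form of the covering is positive
definite (its discriminant is `9ϖ² - 12ϖ² < 0`), so `e` has to be nonnegative there. -/
lemma emb_pos (φ : R →+* ℝ) (hφ : Function.Injective φ) (hpos : 0 < φ ϖ) {e N M s : R}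
    (hM : M ≠ 0)
    (h : e * (e ^ 2 * N ^ 4 + 3 * ϖ * e * N ^ 2 * M ^ 2 + 3 * ϖ ^ 2 * M ^ 4) = s ^ 2) :
    0 ≤ φ e := by
  have h1 := congrArg φ h
  simp only [map_mul, map_add, map_pow, map_ofNat] at h1
  have hM' : φ M ≠ 0 := by rwa [Ne, map_eq_zero_iff φ hφ]
  by_contra! hc
  have h2 : 0 < φ e ^ 2 * φ N ^ 4 + 3 * φ ϖ * φ e * φ N ^ 2 * φ M ^ 2 + 3 * φ ϖ ^ 2 * φ M ^ 4 := by
    have : 0 < φ ϖ ^ 2 * φ M ^ 4 := by positivity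
    nlinarith [sq_nonneg (2 * φ e * φ N ^ 2 + 3 * φ ϖ * φ M ^ 2)]
  nlinarith [sq_nonneg (φ s), mul_pos_of_neg_of_neg hc (neg_lt_zero.2 h2)]

/-- The covering in the class `e` of `Y² = x (x² + 3 ϖ x + 3 ϖ²)` has no points for `e ≠ 1`:
all but `e = ϖ` fail in a real place, and `e = ϖ` fails at `√2`. -/
lemma class_eq_one_pos {e N M s : R} (he : IsClass e) (hc : IsCoprime N M) (hM : M ≠ 0)
    (h : e * (e ^ 2 * N ^ 4 + 3 * ϖ * e * N ^ 2 * M ^ 2 + 3 * ϖ ^ 2 * M ^ 4) = s ^ 2) :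
    e = 1 := by
  have hs1 : (1 : ℝ) < √2 := by
    rw [Real.lt_sqrt] <;> norm_num
  have hs2 : √2 < 2 := by
    rw [Real.sqrt_lt'] <;> norm_num
  have hθ1 : emb₁ θ = √2 := by simp [emb₁, θ]
  have hθ2 : emb₂ θ = -√2 := by simp [emb₂, θ]
  have p1 := emb_pos emb₁ emb₁_injective (by rw [ϖ_eq, map_add, map_ofNat, hθ1]; linarith) hM h
  have p2 := emb_pos emb₂ emb₂_injective (by rw [ϖ_eq, map_add, map_ofNat, hθ2]; linarith) hM h
  obtain ⟨s', d, rfl | rfl | rfl | rfl, rfl | rfl, rfl⟩ := he <;>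
    simp [ε_eq, hθ1] at p1 <;> simp [ε_eq, hθ2] at p2
  · simp
  · linarith
  · linarith
  · linarith
  · exfalso
    have hW : par (ε ^ 3 * (N ^ 4 + 3 * N ^ 2 * M ^ 2 + 3 * M ^ 4)) = 1 := by
      have := par_coprime hc
      simp only [map_mul, map_add, map_pow, map_ofNat, par_ε]
      revert this
      generalize par N = n
      generalize par M = m
      revert n m
      decide
    refine sq_ne_odd_pow 1 hW (s := s) ?_
    rw [← h, ϖ_eq_mul]
    ring
  · linarith
  · linarith

/-! ### The isogenous curve `Y² = x (x² - 6 ϖ x - 3 ϖ²)`: local conditions -/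

lemma three_not_dvd {x : R} (h : ¬ ((3 : ℤ) ∣ x.re ∧ (3 : ℤ) ∣ x.im)) : ¬ (3 : R) ∣ x := by
  intro h'
  exact h ((Zsqrtd.intCast_dvd 3 x).1 (by exact_mod_cast h'))

/-- A nonzero multiple `c` of `1 ± √2` modulo `3` is not a square in the residue field `𝔽₉`, having
norm `-1`; hence `c N²` can be a square modulo `3` only if `3` divides `N`. -/
lemma mod_three {c N s : R} (hc : (c.re - c.im) % 3 = 0 ∧ c.re % 3 ≠ 0 ∨
    (c.re + c.im) % 3 = 0 ∧ c.re % 3 ≠ 0)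
    (h : (3 : R) ∣ c * N ^ 2 - s ^ 2) : (3 : R) ∣ N := by
  have h3 : ∀ a : R, (3 : R) ∣ a ↔ (3 : ℤ) ∣ a.re ∧ (3 : ℤ) ∣ a.im := fun a => by
    exact_mod_cast Zsqrtd.intCast_dvd 3 a
  rw [h3] at h ⊢
  have e : ∀ z : ℤ, (3 : ℤ) ∣ z ↔ (z : ZMod 3) = 0 := fun z =>
    (ZMod.intCast_zmod_eq_zero_iff_dvd z 3).symm
  simp only [← Int.dvd_iff_emod_eq_zero, e, ne_eq, pow_two, Zsqrtd.re_sub, Zsqrtd.im_sub,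
    Zsqrtd.re_mul, Zsqrtd.im_mul] at h hc ⊢
  push_cast at h hc
  revert h hc
  generalize (c.re : ZMod 3) = c1
  generalize (c.im : ZMod 3) = c2
  generalize (N.re : ZMod 3) = n1
  generalize (N.im : ZMod 3) = n2
  generalize (s.re : ZMod 3) = s1
  generalize (s.im : ZMod 3) = s2
  clear e h3
  revert c1 c2 n1 n2 s1 s2
  decide +kernel

/-- The classes `±ε`, `±ε√2` fail at the inert prime `3`, where they are not squares in the
residue field `𝔽₉`. -/
lemma class_three {e N M s : R} (hc : IsCoprime N M) (he3 : ¬ (3 : R) ∣ e)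
    (hm : (e.re - e.im) % 3 = 0 ∧ e.re % 3 ≠ 0 ∨ (e.re + e.im) % 3 = 0 ∧ e.re % 3 ≠ 0)
    (h : e * (e ^ 2 * N ^ 4 - 6 * ϖ * e * N ^ 2 * M ^ 2 - 3 * ϖ ^ 2 * M ^ 4) = s ^ 2) : False := by
  have hϖ : ¬ (3 : R) ∣ ϖ := three_not_dvd (by simp [ϖ])
  have h1 : (3 : R) ∣ e * N ^ 2 := by
    have := mod_three (N := e * N ^ 2) (s := s) hm
      ⟨e * (2 * ϖ * e * N ^ 2 * M ^ 2 + ϖ ^ 2 * M ^ 4), by rw [← h]; ring⟩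
    exact this
  have hN : (3 : R) ∣ N :=
    three_prime.dvd_of_dvd_pow ((three_prime.dvd_or_dvd h1).resolve_left he3)
  obtain ⟨n, rfl⟩ := hN
  have hs : (3 : R) ∣ s := three_prime.dvd_of_dvd_pow (n := 2) ⟨e * (e ^ 2 * 27 * n ^ 4 -
    18 * ϖ * e * n ^ 2 * M ^ 2 - ϖ ^ 2 * M ^ 4), by rw [← h]; ring⟩
  obtain ⟨t, rfl⟩ := hs
  have h3 : e * ϖ ^ 2 * M ^ 4 = 3 * (e * (e ^ 2 * 9 * n ^ 4 -
    6 * ϖ * e * n ^ 2 * M ^ 2) - t ^ 2) :=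
    mul_left_cancel₀ (by decide : (3 : R) ≠ 0) (by linear_combination -h)
  rcases three_prime.dvd_or_dvd (Dvd.intro _ h3.symm) with h4 | h4
  · rcases three_prime.dvd_or_dvd h4 with h4 | h4
    · exact he3 h4
    · exact hϖ (three_prime.dvd_of_dvd_pow h4)
  · exact not_dvd_of_isCoprime three_prime hc (dvd_mul_right 3 n) (three_prime.dvd_of_dvd_pow h4)

/-- The classes `±√2` fail at `√2`: in each case the left side has odd valuation there. -/
lemma class_θ {σ N M s : R} (hσ : σ = 1 ∨ σ = -1) (hc : IsCoprime N M)
    (h : σ * θ * ((σ * θ) ^ 2 * N ^ 4 - 6 * ϖ * (σ * θ) * N ^ 2 * M ^ 2 - 3 * ϖ ^ 2 * M ^ 4) =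
      s ^ 2) : False := by
  have hσ2 : σ ^ 2 = 1 := by rcases hσ with rfl | rfl <;> norm_num
  have hσp : par σ = 1 := by rcases hσ with rfl | rfl <;> simp
  set W := N ^ 4 - 6 * σ * ε * N ^ 2 * M ^ 2 - 3 * ε ^ 2 * M ^ 4 with hW
  have h1 : θ ^ 3 * (σ * W) = s ^ 2 := by
    rw [← h, hW, ϖ_eq_mul]
    linear_combination (-σ * θ ^ 3 * N ^ 4) * hσ2
  by_cases hp : par W = 1
  · exact sq_ne_odd_pow 1 (W := σ * W) (by simp [hσp, hp]) (s := s) h1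
  have hNM : par N = 1 ∧ par M = 1 := by
    have h2 := par_coprime hc
    rw [hW] at hp
    simp only [map_mul, map_sub, map_pow, map_ofNat, par_ε, hσp] at hp
    revert hp h2
    generalize par N = n
    generalize par M = m
    clear * -
    revert n m
    decide
  obtain ⟨i, hi⟩ := sq_mod_two hNM.1
  obtain ⟨j, hj⟩ := sq_mod_two hNM.2
  have hσ3 : ∃ k, σ = 1 + 2 * k := by
    rcases hσ with rfl | rfl
    · exact ⟨0, by ring⟩
    · exact ⟨-1, by ring⟩
  obtain ⟨k, hk⟩ := hσ3
  have h3 : ∃ l, N ^ 2 - 3 * σ * ε * M ^ 2 = θ * (1 + θ * l) := by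
    refine ⟨i - 3 * k - 3 * ε * j - 6 * k * ε * j -3 * k * θ- 1 - 2*θ, ?_⟩
    rw [hi, hj, hk, ε_eq]
    linear_combination (-(i - 3 * k - 3 * (1 + θ) * j - 6 * k * (1+θ) * j -3 * k * θ - 1 - 2*θ)) * θ_sq
  obtain ⟨l, hl⟩ := h3
  have h4 : W = θ ^ 2 * ((1 + θ * l) ^ 2 - θ ^ 2 * (3 * ε ^ 2 * M ^ 4)) := by
    have : W = (N ^ 2 - 3 * σ * ε * M ^ 2) ^ 2 - 12 * ε ^ 2 * M ^ 4 := by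
      rw [hW]; linear_combination (-9 * ε ^ 2 * M ^ 4) * hσ2
    rw [this, hl]
    linear_combination (3 * ε ^ 2 * M ^ 4 * (θ ^ 2 + 2)) * θ_sq
  refine sq_ne_odd_pow 2 (W := σ * ((1 + θ * l) ^ 2 - θ ^ 2 * (3 * ε ^ 2 * M ^ 4))) ?_ (s := s) ?_
  · simp [hσp, par_θ]
  · rw [← h1, h4]; ring

/-- The class `-1` fails at `√2`, through the squares modulo `4`. -/
lemma class_neg_one {N M s : R} (hc : IsCoprime N M)
    (h : -(N ^ 4 + 6 * ϖ * N ^ 2 * M ^ 2 - 3 * ϖ ^ 2 * M ^ 4) = s ^ 2) : False := by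
  have hε : ε ^ 2 = 3 + 2 * θ := by decide
  rcases par_zero_or_one N with hN | hN
  · have hM := (par_coprime hc).resolve_left (by rw [hN]; decide)
    obtain ⟨n, rfl⟩ := par_eq_zero.1 hN
    have h1 : θ ^ 2 * (3 * ε ^ 2 * M ^ 4 - 6 * ϖ * n ^ 2 * M ^ 2 - 2 * n ^ 4) = s ^ 2 := by
      rw [← h, ϖ_eq_mul]
      linear_combination (n ^ 4 * θ ^ 2) * θ_sq
    obtain ⟨t, rfl⟩ : θ ∣ s := θ_prime.dvd_of_dvd_pow (n := 2)
      ⟨θ * (3 * ε ^ 2 * M ^ 4 - 6 * ϖ * n ^ 2 * M ^ 2 - 2 * n ^ 4), by rw [← h1]; ring⟩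
    have h2 : t ^ 2 = 3 * ε ^ 2 * M ^ 4 - 6 * ϖ * n ^ 2 * M ^ 2 - 2 * n ^ 4 :=
      mul_left_cancel₀ (pow_ne_zero 2 θ_ne) (by linear_combination -h1)
    obtain ⟨i, hi⟩ := pow_four_mod_four hM
    rcases par_zero_or_one n with hn | hn
    · obtain ⟨m, rfl⟩ := par_eq_zero.1 hn
      refine sq_ne_one_add (s := t) (k := 2 + θ + 3 * ε ^ 2 * i - 3 * ϖ * m ^ 2 * M ^ 2 - 2 * m ^ 4) ?_
      rw [h2, hi, hε]
      linear_combination (-6 * ϖ * m ^ 2 * M ^ 2 - 2 * m ^ 4 * (θ ^ 2 + 2)) * θ_sq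
    · obtain ⟨j, hj⟩ := sq_mod_two hn
      obtain ⟨k, hk⟩ := sq_mod_two hM
      refine sq_ne_three (s := t) (k := 3 * ε ^ 2 * i - 2 - 3 * ϖ * (j + k + 2 * j * k)
        - 2 * j - 2 * j ^ 2) ?_
      rw [h2, hi, hk, hε, ϖ_eq, show n ^ 4 = (n ^ 2) ^ 2 by ring, hj]
      ring
  · obtain ⟨i, hi⟩ := pow_four_mod_four hN
    rcases par_zero_or_one M with hM | hM
    · obtain ⟨m, rfl⟩ := par_eq_zero.1 hM
      refine sq_ne_three (s := s) (k := -1 - i - 3 * ϖ * N ^ 2 * m ^ 2 + 3 * ϖ ^ 2 * m ^ 4) ?_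
      rw [← h, hi]
      linear_combination (-6 * ϖ * N ^ 2 * m ^ 2 + 3 * ϖ ^ 2 * m ^ 4 * (θ ^ 2 + 2)) * θ_sq
    · obtain ⟨j, hj⟩ := pow_four_mod_four hM
      obtain ⟨k, hk⟩ := sq_mod_two hN
      obtain ⟨l, hl⟩ := sq_mod_two hM
      refine sq_ne_one_add (s := s) (k := - i - 3 * ϖ * (k + l + 2 * k * l) + 3 * ϖ ^ 2 * j
        + 1 + θ) ?_
      rw [← h, hi, hj, hk, hl, ϖ_eq]
      linear_combination (3 * (1+4*j) - 12 * j) * θ_sq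

/-- The covering in the class `e` of `Y² = x (x² - 6 ϖ x - 3 ϖ²)` has no points for `e ≠ 1`. -/
lemma class_eq_one_neg {e N M s : R} (he : IsClass e) (hc : IsCoprime N M)
    (h : e * (e ^ 2 * N ^ 4 - 6 * ϖ * e * N ^ 2 * M ^ 2 - 3 * ϖ ^ 2 * M ^ 4) = s ^ 2) :
    e = 1 := by
  obtain ⟨s', d, rfl | rfl | rfl | rfl, rfl | rfl, rfl⟩ := he
  · simp
  · exact (class_θ (Or.inl rfl) hc h).elim
  · exact (class_neg_one hc (s := s) (by rw [← h]; ring)).elim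
  · exact (class_θ (Or.inr rfl) hc h).elim
  all_goals
    refine (class_three hc (three_not_dvd ?_) ?_ h).elim <;> simp [ε, θ]

/-! ### The infinite descent -/

/-- On `Y² = x (x² + 3 ϖ x + 3 ϖ²)`, one of `x = X / Z` and `3 ϖ² / x` is the square of a
fraction `N / M`. -/
lemma descent_pos {X Z Y : R} (hX : X ≠ 0) (hZ : Z ≠ 0)
    (h : X * Z * (X ^ 2 + 3 * ϖ * X * Z + 3 * ϖ ^ 2 * Z ^ 2) = Y ^ 2) :
    ∃ N M s, IsCoprime N M ∧ N ≠ 0 ∧ M ≠ 0 ∧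
      (X * M ^ 2 = Z * N ^ 2 ∨ 3 * ϖ ^ 2 * Z * M ^ 2 = X * N ^ 2) ∧
      s ^ 2 = N ^ 4 + 3 * ϖ * N ^ 2 * M ^ 2 + 3 * ϖ ^ 2 * M ^ 4 := by
  obtain ⟨X', Z', hXZ, e, N, M, s, he, hc, hN, hM, h1, h2⟩ :=
    two_descent (σ := 1) (Or.inl rfl) (by ring) hX hZ h
  obtain rfl := class_eq_one_pos he hc hM h2
  refine ⟨N, M, s, hc, hN, hM, ?_, by rw [← h2]; ring⟩
  rcases hXZ with ⟨rfl, rfl⟩ | ⟨rfl, rfl⟩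
  · exact Or.inl (by rw [h1]; ring)
  · exact Or.inr (by rw [h1]; ring)

/-- On `Y² = x (x² - 6 ϖ x - 3 ϖ²)`, one of `x = X / Z` and `-3 ϖ² / x` is the square of a
fraction `N / M`. -/
lemma descent_neg {X Z Y : R} (hX : X ≠ 0) (hZ : Z ≠ 0)
    (h : X * Z * (X ^ 2 - 6 * ϖ * X * Z - 3 * ϖ ^ 2 * Z ^ 2) = Y ^ 2) :
    ∃ N M, IsCoprime N M ∧ N ≠ 0 ∧ M ≠ 0 ∧
      (X * M ^ 2 = Z * N ^ 2 ∨ -3 * ϖ ^ 2 * Z * M ^ 2 = X * N ^ 2) := by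
  obtain ⟨X', Z', hXZ, e, N, M, s, he, hc, hN, hM, h1, h2⟩ :=
    two_descent (a := -6 * ϖ) (b := -(3 * ϖ ^ 2)) (σ := -1) (Or.inr rfl) (by ring) hX hZ
      (Y := Y) (by rw [← h]; ring)
  obtain rfl := class_eq_one_neg he hc (s := s) (by rw [← h2]; ring)
  refine ⟨N, M, hc, hN, hM, ?_⟩
  rcases hXZ with ⟨rfl, rfl⟩ | ⟨rfl, rfl⟩
  · exact Or.inl (by rw [h1]; ring)
  · exact Or.inr (by linear_combination h1)

lemma isCoprime_of_quartic {N M s a b : R} (hc : IsCoprime N M) (hM : M ≠ 0)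
    (h : s ^ 2 = N ^ 4 + M * (a * N ^ 2 + b * M)) : IsCoprime M s := by
  refine isCoprime_of_prime_dvd (fun h0 => hM h0.1) fun p hp h1 h2 => ?_
  have h3 : p ∣ N ^ 4 := by
    have := dvd_sub (h2.mul_left s) (h1.mul_right (a * N ^ 2 + b * M))
    convert this using 1
    linear_combination -h
  exact not_dvd_of_isCoprime hp hc (hp.dvd_of_dvd_pow h3) h1

lemma two_not_dvd {N M s : R} (hc : IsCoprime N M)
    (h : s ^ 2 = N ^ 4 - 6 * ϖ * N ^ 2 * M ^ 2 - 3 * ϖ ^ 2 * M ^ 4) : ¬ 2 ∣ s := by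
  rintro ⟨r, rfl⟩
  have h2 : (2 : ZMod 2) = 0 := rfl
  rcases par_zero_or_one N with hN | hN
  · have hM := (par_coprime hc).resolve_left (by rw [hN]; decide)
    obtain ⟨n, rfl⟩ := par_eq_zero.1 hN
    have h1 : 2 * r ^ 2 = 2 * n ^ 4 - 6 * ϖ * n ^ 2 * M ^ 2 - 3 * ε ^ 2 * M ^ 4 := by
      apply mul_left_cancel₀ two_ne
      rw [ϖ_eq_mul] at h ⊢
      linear_combination h + (n ^ 4 * (θ ^ 2 + 2) - 6 * θ * ε * n ^ 2 * M ^ 2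
        - 3 * ε ^ 2 * M ^ 4) * θ_sq
    have h3 := congrArg par h1
    simp only [map_mul, map_sub, map_pow, map_ofNat, par_ε, hM, par_ϖ, h2] at h3
    simp at h3
    exact absurd h3 (by decide)
  · have h3 := congrArg par h
    simp only [map_mul, map_sub, map_pow, map_ofNat, hN, par_ϖ, h2] at h3
    simp at h3

/-- The infinite descent: composing the two `2`-isogenies, a solution yields another whose last
coordinate is a proper divisor of the given one. -/
lemma quartic_descent {δ t γ : R} (hγ : γ ≠ 0)
    (h : δ ^ 2 = t ^ 4 + 3 * ϖ * t ^ 2 * γ ^ 2 + 3 * ϖ ^ 2 * γ ^ 4) :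
    ∃ δ' t' γ', γ' ≠ 0 ∧ δ' ^ 2 = t' ^ 4 + 3 * ϖ * t' ^ 2 * γ' ^ 2 + 3 * ϖ ^ 2 * γ' ^ 4 ∧
      DvdNotUnit γ' γ := by
  -- the dual isogeny: a point on `Y² = x (x² - 6 ϖ x - 3 ϖ²)`
  set u := 2 * δ - (2 * t ^ 2 + 3 * ϖ * γ ^ 2) with hu
  set v := 2 * δ + (2 * t ^ 2 + 3 * ϖ * γ ^ 2) with hv
  have huv : u * v = 3 * ϖ ^ 2 * γ ^ 4 := by rw [hu, hv]; linear_combination 4 * h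
  have huv' : v - u = 4 * t ^ 2 + 6 * ϖ * γ ^ 2 := by rw [hu, hv]; ring
  have h3 : (3 : R) * ϖ ^ 2 * γ ^ 4 ≠ 0 :=
    mul_ne_zero (by decide) (pow_ne_zero 4 hγ)
  have hv0 : v ≠ 0 := by rintro h0; rw [h0, mul_zero] at huv; exact h3 huv.symm
  have hu0 : u ≠ 0 := by rintro h0; rw [h0, zero_mul] at huv; exact h3 huv.symm
  obtain ⟨N, M, hNM, hN, hM, hx⟩ := descent_neg (Y := 2 * t * v * γ) hv0 (pow_ne_zero 2 hγ)
    (by linear_combination γ ^ 2 * v ^ 2 * huv' + v * γ ^ 2 * huv)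
  have hx' : ∃ x, x ^ 2 - 6 * ϖ * x * γ ^ 2 - 3 * ϖ ^ 2 * γ ^ 4 = 4 * t ^ 2 * x ∧
      x * M ^ 2 = γ ^ 2 * N ^ 2 := by
    rcases hx with hx | hx
    · exact ⟨v, by linear_combination v * huv' + huv, hx⟩
    · refine ⟨-u, by linear_combination -u * huv' + huv, mul_left_cancel₀ hv0 ?_⟩
      linear_combination γ ^ 2 * hx - M ^ 2 * huv
  obtain ⟨x, hx1, hx2⟩ := hx'
  have hQ : (N ^ 4 - 6 * ϖ * N ^ 2 * M ^ 2 - 3 * ϖ ^ 2 * M ^ 4) * γ ^ 2 = (2 * t * N * M) ^ 2 := by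
    apply mul_left_cancel₀ (pow_ne_zero 2 hγ)
    linear_combination M ^ 4 * hx1 - (x * M ^ 2 + γ ^ 2 * N ^ 2 - 6 * ϖ * γ ^ 2 * M ^ 2
      - 4 * t ^ 2 * M ^ 2) * hx2
  obtain ⟨s, hs⟩ := (IsIntegrallyClosed.pow_dvd_pow_iff two_ne_zero).1 (Dvd.intro_left _ hQ)
  have hs2 : s ^ 2 = N ^ 4 - 6 * ϖ * N ^ 2 * M ^ 2 - 3 * ϖ ^ 2 * M ^ 4 := by
    apply mul_left_cancel₀ (pow_ne_zero 2 hγ)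
    rw [hs] at hQ
    linear_combination -hQ
  have hMγ : M ∣ γ := by
    refine (isCoprime_of_quartic (a := -6 * ϖ * M) (b := -3 * ϖ ^ 2 * M ^ 2) hNM hM
      (by rw [hs2]; ring)).dvd_of_dvd_mul_right (?_ : M ∣ γ * s)
    rw [← hs]; exact dvd_mul_left _ _
  have hγM : ¬ γ ∣ M := by
    rintro ⟨c, rfl⟩
    refine two_not_dvd hNM hs2 ⟨t * N * c, mul_left_cancel₀ hγ ?_⟩
    rw [← hs]; ring
  -- the isogeny back to `Y² = x (x² + 3 ϖ x + 3 ϖ²)`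
  set A := N ^ 2 - 3 * ϖ * M ^ 2 with hA
  have hAs : (A - s) * (A + s) = 12 * ϖ ^ 2 * M ^ 4 := by
    rw [hA]; linear_combination -hs2
  have hAA : (A - s) + (A + s) = 2 * N ^ 2 - 6 * ϖ * M ^ 2 := by rw [hA]; ring
  have h12 : (12 : R) * ϖ ^ 2 * M ^ 4 ≠ 0 :=
    mul_ne_zero (by decide) (pow_ne_zero 4 hM)
  have h1 : A - s ≠ 0 := by rintro h0; rw [h0, zero_mul] at hAs; exact h12 hAs.symm
  obtain ⟨m, n, -, hmn, -, hn, hξ, -⟩ := descent_pos (X := A - s) (Z := 2 * M ^ 2)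
    (Y := 2 * (A - s) * M * N)
    h1 (mul_ne_zero two_ne (pow_ne_zero 2 hM))
    (by linear_combination (A - s) * (2 * M ^ 2) * (A - s) * hAA - 2 * (A - s) * M ^ 2 * hAs)
  have hξ' : ∃ ξ, ξ ^ 2 + 6 * ϖ * ξ * M ^ 2 + 12 * ϖ ^ 2 * M ^ 4 = 2 * ξ * N ^ 2 ∧
      ξ * n ^ 2 = 2 * M ^ 2 * m ^ 2 := by
    rcases hξ with hξ | hξ
    · exact ⟨A - s, by linear_combination (A - s) * hAA - hAs, hξ⟩
    · refine ⟨A + s, by linear_combination (A + s) * hAA - hAs, mul_left_cancel₀ h1 ?_⟩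
      linear_combination 2 * M ^ 2 * hξ + n ^ 2 * hAs
  obtain ⟨ξ, hξ1, hξ2⟩ := hξ'
  have hQ' : (m ^ 4 + 3 * ϖ * m ^ 2 * n ^ 2 + 3 * ϖ ^ 2 * n ^ 4) * M ^ 2 = (m * N * n) ^ 2 := by
    apply mul_left_cancel₀ (pow_ne_zero 2 hM)
    apply mul_left_cancel₀ (by decide : (4 : R) ≠ 0)
    linear_combination n ^ 4 * hξ1 - (ξ * n ^ 2 + 2 * M ^ 2 * m ^ 2 + 6 * ϖ * n ^ 2 * M ^ 2
      - 2 * N ^ 2 * n ^ 2) * hξ2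
  obtain ⟨δ', hδ⟩ := (IsIntegrallyClosed.pow_dvd_pow_iff two_ne_zero).1 (Dvd.intro_left _ hQ')
  have hδ2 : δ' ^ 2 = m ^ 4 + 3 * ϖ * m ^ 2 * n ^ 2 + 3 * ϖ ^ 2 * n ^ 4 := by
    apply mul_left_cancel₀ (pow_ne_zero 2 hM)
    rw [hδ] at hQ'
    linear_combination -hQ'
  have hnM : n ∣ M := by
    refine (isCoprime_of_quartic (a := 3 * ϖ * n) (b := 3 * ϖ ^ 2 * n ^ 2) hmn hn
      (by rw [hδ2]; ring)).dvd_of_dvd_mul_right (?_ : n ∣ M * δ')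
    rw [← hδ]; exact dvd_mul_left _ _
  exact ⟨δ', m, n, hn, hδ2,
    dvdNotUnit_of_dvd_of_not_dvd (hnM.trans hMγ) fun h => hγM (h.trans hnM)⟩

/-- Infinite descent along proper divisibility of `γ`. -/
lemma quartic_no_solution (γ : R) : ∀ δ t : R, γ ≠ 0 →
    δ ^ 2 ≠ t ^ 4 + 3 * ϖ * t ^ 2 * γ ^ 2 + 3 * ϖ ^ 2 * γ ^ 4 := by
  induction γ using (IsWellFounded.wf (r := DvdNotUnit (α := R))).induction with
  | _ γ ih =>
    intro δ t hγ h
    obtain ⟨δ', t', γ', hγ', h', hd⟩ := quartic_descent hγ h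
    exact ih γ' hd δ' t' hγ' h'

/-- The elliptic curve `Y² = x (x² + 3 ϖ x + 3 ϖ²)` governs this equation, through
`x = ϖ (w - t²) / t²`. -/
lemma cubic_no_solution {t r w : R} (ht : t ≠ 0) (hr : r ≠ 0) :
    t ^ 6 + 2 * ϖ * r ^ 2 ≠ w ^ 3 := by
  intro h
  have hw : w - t ^ 2 ≠ 0 := by
    intro h0
    rw [sub_eq_zero.1 h0] at h
    have : 2 * ϖ * r ^ 2 = 0 := by linear_combination h
    exact mul_ne_zero (by decide) (pow_ne_zero 2 hr) this
  obtain ⟨N, M, s, -, -, hM, -, hs⟩ := descent_pos (X := ϖ * (w - t ^ 2)) (Z := t ^ 2)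
    (Y := θ * ϖ ^ 2 * t * r) (mul_ne_zero ϖ_ne hw) (pow_ne_zero 2 ht)
    (by linear_combination -ϖ ^ 3 * t ^ 2 * h - ϖ ^ 4 * t ^ 2 * r ^ 2 * θ_sq)
  exact quartic_no_solution M s N hM hs

/-! ### Cubes as norms from `ℤ[√2]` -/

/-- If the norm of `x + y √2` is an odd cube and `x`, `y` are coprime, then `x + y √2` is a cube
up to a unit. -/
lemma norm_cube {x y p : ℤ} (h : x ^ 2 - 2 * y ^ 2 = p ^ 3) (hp : Odd p) (hxy : IsCoprime x y) :
    ∃ w : R, (x : R) + y * θ = w ^ 3 ∨ (x : R) + y * θ = ε * w ^ 3 ∨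
      (x : R) + y * θ = ε ^ 2 * w ^ 3 := by
  have hR : ((x : R) + y * θ) * (x - y * θ) = (p : R) ^ 3 := by
    have := congrArg (Int.cast : ℤ → R) h
    push_cast at this
    linear_combination this - (y : R) ^ 2 * θ_sq
  have hpp : par p = 1 := by
    obtain ⟨k, rfl⟩ := hp
    push_cast
    simp only [map_add, map_mul, map_ofNat, map_one]
    rw [show (2 : ZMod 2) = 0 from rfl]; simp
  have hc : IsCoprime ((x : R) + y * θ) (x - y * θ) := by
    refine isCoprime_of_prime_dvd (fun h0 => ?_) fun q hq h1 h2 => ?_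
    · rw [h0.1, zero_mul] at hR
      have := congrArg par hR
      simp [hpp] at this
    · have hqθ : ¬ q ∣ θ := fun h3 => by
        have h4 : θ ∣ (p : R) ^ 3 := by
          rw [← hR]
          exact (((hq.dvd_prime_iff_associated θ_prime).1 h3).symm.dvd.trans h1).mul_right _
        have h5 := par_eq_zero.2 h4
        simp [hpp] at h5
      have hq2 : ¬ q ∣ 2 := fun h3 => hqθ (hq.dvd_of_dvd_pow (θ_sq ▸ h3))
      have h3 : q ∣ (x : R) := by
        have := dvd_add h1 h2
        rw [show (x : R) + y * θ + (x - y * θ) = 2 * x by ring] at this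
        exact (hq.dvd_or_dvd this).resolve_left hq2
      have h4 : q ∣ (y : R) := by
        have := (dvd_sub_right h3).1 h2
        exact (hq.dvd_or_dvd this).resolve_right hqθ
      exact not_dvd_of_isCoprime hq (by simpa using hxy.map (Int.castRingHom R)) h3 h4
  obtain ⟨w, u, hu⟩ := exists_associated_pow_of_mul_eq_pow' hc hR
  obtain ⟨v, hv | hv | hv⟩ := unit_mod_cubes u.isUnit
  · exact ⟨w * v, Or.inl (by rw [← hu, hv]; ring)⟩
  · exact ⟨w * v, Or.inr (Or.inl (by rw [← hu, hv]; ring))⟩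
  · exact ⟨w * v, Or.inr (Or.inr (by rw [← hu, hv]; ring))⟩

/-- The three cases of `norm_cube` in coordinates, with `w = a + b √2`. -/
lemma norm_cube_coords {x y p : ℤ} (h : x ^ 2 - 2 * y ^ 2 = p ^ 3) (hp : Odd p)
    (hxy : IsCoprime x y) :
    (∃ w : R, (x : R) + y * θ = w ^ 3) ∨
    ∃ a b A B : ℤ, A = a ^ 3 + 6 * a * b ^ 2 ∧ B = 3 * a ^ 2 * b + 2 * b ^ 3 ∧
      ((x = A + 2 * B ∧ y = A + B) ∨ (x = 3 * A + 4 * B ∧ y = 2 * A + 3 * B)) := by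
  obtain ⟨w, hw | hw | hw⟩ := norm_cube h hp hxy
  · exact Or.inl ⟨w, hw⟩
  all_goals
    refine Or.inr ⟨w.re, w.im, _, _, rfl, rfl, ?_⟩
    have h1 := congrArg Zsqrtd.re hw
    have h2 := congrArg Zsqrtd.im hw
    simp [θ, ε, pow_succ] at h1 h2
  · left; rw [h1, h2]; constructor <;> ring
  · right; rw [h1, h2]; constructor <;> ring

/-- If `b` divides `x² - D y²` with `x` and `y` prime to `b`, then `D` is a square modulo `b`. -/
lemma jacobi_eq_one {D x y b : ℤ} (hb : 0 < b) (hx : IsCoprime x b) (hy : IsCoprime y b)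
    (h : b ∣ x ^ 2 - D * y ^ 2) : jacobiSym D b.natAbs = 1 := by
  have hbn : (b.natAbs : ℤ) = b := Int.natAbs_of_nonneg hb.le
  have hx' : x.gcd b.natAbs = 1 := by rw [hbn]; exact Int.isCoprime_iff_gcd_eq_one.1 hx
  have hy' : y.gcd b.natAbs = 1 := by rw [hbn]; exact Int.isCoprime_iff_gcd_eq_one.1 hy
  have h1 : jacobiSym (x ^ 2) b.natAbs = jacobiSym (D * y ^ 2) b.natAbs := by
    apply jacobiSym.mod_left'
    rw [hbn]
    exact (Int.modEq_iff_dvd.2 h).symm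
  rw [jacobiSym.sq_one' hx', jacobiSym.mul_left, jacobiSym.sq_one' hy', mul_one] at h1
  exact h1.symm

/-! ### The first case: `t¹² + 8 t⁶ r² + 8 r⁴ = p³` -/

lemma mod_eight_of_jacobi {b : ℤ} (hb : 0 < b) (ho : Odd b) (h : jacobiSym (-2) b.natAbs = 1) :
    (b : ZMod 8) = 1 ∨ (b : ZMod 8) = 3 := by
  rw [jacobiSym.at_neg_two (Int.natAbs_odd.2 ho)] at h
  have h1 : ((b.natAbs : ℕ) : ZMod 8) = (b : ZMod 8) := by
    rw [← Int.cast_natCast, Int.natAbs_of_nonneg hb.le]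
  rw [h1] at h
  revert h
  generalize (b : ZMod 8) = c
  revert c
  decide

lemma mod_four_of_jacobi {b : ℤ} (hb : 0 < b) (ho : Odd b) (h : jacobiSym (-1) b.natAbs = 1) :
    (b : ZMod 4) = 1 := by
  rw [jacobiSym.at_neg_one (Int.natAbs_odd.2 ho)] at h
  have h1 : ((b.natAbs : ℕ) : ZMod 4) = (b : ZMod 4) := by
    rw [← Int.cast_natCast, Int.natAbs_of_nonneg hb.le]
  rw [h1] at h
  have h2 : (b : ZMod 4) ≠ 3 := by rintro h2; rw [h2] at h; exact absurd h (by decide)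
  obtain ⟨k, rfl⟩ := ho
  push_cast at h2 ⊢
  revert h2
  generalize (k : ZMod 4) = c
  revert c
  decide

/-- Coprimality to `b` of two coprime integers, from a relation with odd `b`. -/
lemma coprime_pair {b t r : ℤ} {i j k : ℕ} (ho : Odd b) (hc : IsCoprime t r)
    (h : b ∣ t ^ i + 2 ^ k * r ^ j) (hj : j ≠ 0) (hi : i ≠ 0) :
    IsCoprime t b ∧ IsCoprime (2 * r) b := by
  have hb : b ≠ 0 := by rintro rfl; simp at ho
  have h2 : IsCoprime (2 : ℤ) b := Int.isCoprime_two_left.2 ho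
  constructor
  · refine (isCoprime_of_prime_dvd (fun h0 => hb h0.2) fun p hp h1 h3 => ?_)
    have h4 : p ∣ 2 ^ k * r ^ j := (dvd_add_right (h1.pow hi)).1 (h3.trans h)
    rcases hp.dvd_or_dvd h4 with h4 | h4
    · exact hp.not_isUnit (h2.isUnit_of_dvd' (hp.dvd_of_dvd_pow h4) h3)
    · exact hp.not_isUnit (hc.isUnit_of_dvd' h1 (hp.dvd_of_dvd_pow h4))
  · refine h2.mul_left (isCoprime_of_prime_dvd (fun h0 => hb h0.2) fun p hp h1 h3 => ?_)
    have h4 : p ∣ t ^ i := (dvd_add_left ((h1.pow hj).mul_left _)).1 (h3.trans h)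
    exact hp.not_isUnit (hc.isUnit_of_dvd' (hp.dvd_of_dvd_pow h4) h1)

lemma odd_pow_coprime {t r : ℤ} (n : ℕ) (h : IsCoprime t r) (ht : Odd t) : IsCoprime t (2 ^ n * r) :=
  (IsCoprime.pow_right (Int.isCoprime_two_right.2 ht)).mul_right h

/-- The equation attached to a denominator `m = t³` of `y / x`, with numerator `2r`. Its left side is
the norm of `t⁶ + 4r² + 2r²√2`, which is therefore `ε ^ k` times a cube. The exponent `k = 0` leads
to the elliptic curve of `cubic_no_solution`; `k = 1, 2` contradict the value of the Jacobi symbol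
of `-2` modulo a factor of the binary cubic forms involved. -/
lemma caseA {t r p : ℤ} (hto : Odd t) (hc : IsCoprime t r) (ht : t ≠ 0) (hr : r ≠ 0) :
    t ^ 12 + 8 * t ^ 6 * r ^ 2 + 8 * r ^ 4 ≠ p ^ 3 := by
  intro h
  have hp : Odd p := by
    have h1 : Odd (p ^ 3) := by
      rw [← h, add_assoc]
      exact hto.pow.add_even ⟨4 * t ^ 6 * r ^ 2 + 4 * r ^ 4, by ring⟩
    exact Int.odd_pow.1 h1 |>.resolve_right (by norm_num)
  have hxy : IsCoprime (t ^ 6 + 4 * r ^ 2) (2 * r ^ 2) := by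
    have : IsCoprime (t ^ 6) (2 * r ^ 2) := by
      have h1 := odd_pow_coprime 1 (hc.pow_right (n := 2)) hto
      rw [pow_one] at h1
      exact h1.pow_left
    rw [show t ^ 6 + 4 * r ^ 2 = t ^ 6 + 2 * (2 * r ^ 2) by ring]
    exact this.add_mul_right_left 2
  rcases norm_cube_coords (x := t ^ 6 + 4 * r ^ 2) (y := 2 * r ^ 2) (by rw [← h]; ring) hp hxy with
    ⟨w, hw⟩ | ⟨a, b, A, B, hA, hB, ⟨h1, h2⟩ | ⟨h1, h2⟩⟩
  · refine cubic_no_solution (t := (t : R)) (r := (r : R)) (w := w)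
      (by exact_mod_cast ht) (by exact_mod_cast hr) ?_
    rw [← hw, ϖ_eq]; push_cast; ring
  · have hB1 : t ^ 6 + 2 * r ^ 2 = B := by linarith
    have hA1 : t ^ 6 = -A := by linarith
    have hao : Odd a := by
      by_contra hne
      obtain ⟨k, rfl⟩ := Int.not_odd_iff_even.1 hne
      have : Odd (t ^ 6) := hto.pow
      rw [hA1, hA] at this
      exact (Int.not_odd_iff_even.2 ⟨-(4 * k ^ 3 + 6 * k * b ^ 2), by ring⟩) this
    have hbo : Odd b := by
      by_contra hne
      obtain ⟨k, rfl⟩ := Int.not_odd_iff_even.1 hne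
      have : Odd (t ^ 6) := hto.pow
      rw [show t ^ 6 = B - 2 * r ^ 2 by linarith, hB] at this
      exact (Int.not_odd_iff_even.2 ⟨3 * a ^ 2 * k + 8 * k ^ 3 - r ^ 2, by ring⟩) this
    have hBf : t ^ 6 + 2 * r ^ 2 = b * (3 * a ^ 2 + 2 * b ^ 2) := by rw [hB1, hB]; ring
    have hb : 0 < b := by
      have h3 : 0 < b * (3 * a ^ 2 + 2 * b ^ 2) := by rw [← hBf]; positivity
      exact pos_of_mul_pos_left h3 (by positivity)
    obtain ⟨h4, h5⟩ := coprime_pair (i := 6) (k := 1) (j := 2) hbo hc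
      ⟨3 * a ^ 2 + 2 * b ^ 2, by rw [← hBf]; ring⟩ two_ne_zero (by norm_num)
    have h6 := mod_eight_of_jacobi hb hbo (jacobi_eq_one (D := -2) (x := t ^ 3) (y := r) hb
      h4.pow_left h5.of_mul_left_right ⟨3 * a ^ 2 + 2 * b ^ 2, by rw [← hBf]; ring⟩)
    obtain ⟨k, rfl⟩ := hto
    obtain ⟨l, rfl⟩ := hao
    have h7 := congrArg (Int.cast : ℤ → ZMod 8) hBf
    push_cast at h7
    revert h6 h7
    generalize (b : ZMod 8) = b'
    generalize (k : ZMod 8) = k'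
    generalize (l : ZMod 8) = l'
    generalize (r : ZMod 8) = r'
    clear * -
    revert b' k' l' r'
    decide +kernel
  · have hA1 : t ^ 6 = -A - 2 * B := by linarith
    have hao : Odd a := by
      by_contra hne
      obtain ⟨k, rfl⟩ := Int.not_odd_iff_even.1 hne
      have : Odd (t ^ 6) := hto.pow
      rw [hA1, hA] at this
      exact (Int.not_odd_iff_even.2 ⟨-(4 * k ^ 3 + 6 * k * b ^ 2) - B, by ring⟩) this
    have hbe : Even b := by
      by_contra hne
      have hbo := Int.not_even_iff_odd.1 hne
      have : Odd B := by
        rw [hB]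
        exact ((Odd.mul (by decide) hao.pow).mul hbo).add_even ⟨b ^ 3, by ring⟩
      have h4 : Odd (3 * B) := Odd.mul (by decide) this
      rw [show 3 * B = 2 * r ^ 2 - 2 * A by linarith] at h4
      exact (Int.not_odd_iff_even.2 ⟨r ^ 2 - A, by ring⟩) h4
    obtain ⟨c, hcdef⟩ : ∃ c, c = a + 2 * b := ⟨_, rfl⟩
    have hBf : t ^ 6 + 8 * r ^ 2 = c * (7 * a ^ 2 + 16 * a * b + 10 * b ^ 2) := by
      have : t ^ 6 + 8 * r ^ 2 = 7 * A + 10 * B := by linarith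
      rw [this, hA, hB, hcdef]; ring
    have hco : Odd c := by rw [hcdef]; exact hao.add_even ⟨b, by ring⟩
    have hb : 0 < c := by
      have h3 : 0 < c * (7 * a ^ 2 + 16 * a * b + 10 * b ^ 2) := by rw [← hBf]; positivity
      exact pos_of_mul_pos_left h3 (by nlinarith [sq_nonneg (7 * a + 8 * b), sq_nonneg b])
    obtain ⟨h4, h5⟩ := coprime_pair (i := 6) (k := 3) (j := 2) hco hc
      ⟨_, by rw [← hBf]; ring⟩ two_ne_zero (by norm_num)
    have h6 := mod_eight_of_jacobi hb hco (jacobi_eq_one (D := -2) (x := t ^ 3) (y := 2 * r) hb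
      h4.pow_left h5 ⟨_, by rw [← hBf]; ring⟩)
    obtain ⟨k, rfl⟩ := hto
    obtain ⟨l, rfl⟩ := hao
    obtain ⟨m, rfl⟩ := hbe
    rw [hA, hB] at hA1
    rw [hcdef] at h6
    have h7 := congrArg (Int.cast : ℤ → ZMod 8) hA1
    push_cast at h7 h6
    revert h6 h7
    generalize (m : ZMod 8) = m'
    generalize (k : ZMod 8) = k'
    generalize (l : ZMod 8) = l'
    clear * -
    revert k' l' m'
    decide +kernel

/-! ### A chain of equations ending at `X³ + Y³ = Z³` -/

lemma split_prime {q m n y i : ℕ} (hq : q.Prime) (hc : m.Coprime n) (h : m * n = q ^ i * y) :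
    (∃ m', m = q ^ i * m' ∧ m' * n = y) ∨ (∃ n', n = q ^ i * n' ∧ m * n' = y) := by
  have hq0 : 0 < q ^ i := pow_pos hq.pos i
  by_cases hm : q ∣ m
  · left
    have : (q ^ i).Coprime n := (Nat.Coprime.coprime_dvd_left hm hc).pow_left i
    obtain ⟨m', rfl⟩ := this.dvd_of_dvd_mul_right (Dvd.intro _ h.symm)
    exact ⟨m', rfl, Nat.eq_of_mul_eq_mul_left hq0 (by rw [← h]; ring)⟩
  · right
    have : (q ^ i).Coprime m := ((Nat.Prime.coprime_iff_not_dvd hq).2 hm).pow_left i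
    obtain ⟨n', rfl⟩ := this.dvd_of_dvd_mul_left (Dvd.intro _ h.symm)
    exact ⟨n', rfl, Nat.eq_of_mul_eq_mul_left hq0 (by rw [← h]; ring)⟩

lemma split_pow {m n x k : ℕ} (hk : k ≠ 0) (hc : m.Coprime n) (h : m * n = x ^ k) :
    ∃ u v, u * v = x ∧ m = u ^ k ∧ n = v ^ k := by
  obtain ⟨u, hu⟩ := exists_eq_pow_of_mul_eq_pow (by rw [Nat.isUnit_iff]; exact hc) h
  obtain ⟨v, hv⟩ := exists_eq_pow_of_mul_eq_pow (by rw [Nat.isUnit_iff]; exact hc.symm) (mul_comm m n ▸ h)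
  refine ⟨u, v, Nat.pow_left_injective hk ?_, hu, hv⟩
  simp only [mul_pow, ← hu, ← hv, h]

/-- The factorizations into coprime factors of `2 ^ i * 3 ^ j * x ^ k`. -/
lemma split {m n x i j k : ℕ} (hk : k ≠ 0) (hc : m.Coprime n)
    (h : m * n = 2 ^ i * (3 ^ j * x ^ k)) :
    ∃ u v, u * v = x ∧ ((m = u ^ k ∧ n = 2 ^ i * (3 ^ j * v ^ k)) ∨
      (n = u ^ k ∧ m = 2 ^ i * (3 ^ j * v ^ k)) ∨
      (m = 2 ^ i * u ^ k ∧ n = 3 ^ j * v ^ k) ∨ (n = 2 ^ i * u ^ k ∧ m = 3 ^ j * v ^ k)) := by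
  rcases split_prime Nat.prime_two hc h with ⟨m, rfl, h'⟩ | ⟨n, rfl, h'⟩
  · have hc' := hc.coprime_mul_left
    rcases split_prime Nat.prime_three hc' h' with ⟨m, rfl, hm⟩ | ⟨n, rfl, hn⟩
    · obtain ⟨u, v, huv, rfl, rfl⟩ := split_pow hk hc'.coprime_mul_left hm
      exact ⟨v, u, by rw [mul_comm, huv], by tauto⟩
    · obtain ⟨u, v, huv, rfl, rfl⟩ := split_pow hk hc'.coprime_mul_left_right hn
      exact ⟨u, v, huv, by tauto⟩
  · have hc' := hc.coprime_mul_left_right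
    rcases split_prime Nat.prime_three hc' h' with ⟨m, rfl, hm⟩ | ⟨n, rfl, hn⟩
    · obtain ⟨u, v, huv, rfl, rfl⟩ := split_pow hk hc'.coprime_mul_left hm
      exact ⟨v, u, by rw [mul_comm, huv], by tauto⟩
    · obtain ⟨u, v, huv, rfl, rfl⟩ := split_pow hk hc'.coprime_mul_left_right hn
      exact ⟨u, v, huv, by tauto⟩

/-- The factorization `N = ((c - a) / 2) * ((c + a) / 2)`. -/
lemma half_split {a c N : ℕ} (hc : a.Coprime c) (h : c ^ 2 = a ^ 2 + 4 * N) :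
    ∃ m n, m.Coprime n ∧ m * n = N ∧ m + n = c ∧ n = m + a := by
  have hac : a ≤ c := by
    by_contra! h1
    have : c ^ 2 < a ^ 2 := Nat.pow_lt_pow_left h1 two_ne_zero
    omega
  obtain ⟨d, rfl⟩ := Nat.exists_eq_add_of_le hac
  have h1 : d * (d + 2 * a) = 4 * N := by nlinarith
  have h2 : 2 ∣ d := by
    have h3 : 2 ∣ d * (d + 2 * a) := ⟨2 * N, by rw [h1]; ring⟩
    rcases Nat.prime_two.dvd_mul.1 h3 with h3 | h3 <;> omega
  obtain ⟨m, rfl⟩ := h2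
  refine ⟨m, m + a, ?_, by nlinarith, by ring, rfl⟩
  rw [Nat.coprime_self_add_right]
  rw [Nat.coprime_self_add_right] at hc
  exact hc.coprime_mul_left_right.symm

lemma mod_of_coprime {q x y k : ℕ} (hq : q.Prime) (hk : k ≠ 0) (h : (x ^ k).Coprime y)
    (hy : q ∣ y) : x % q ≠ 0 := fun h0 =>
  Nat.not_coprime_of_dvd_of_dvd hq.one_lt (dvd_pow (Nat.dvd_of_mod_eq_zero h0) hk) hy h

lemma pow_mod_three {x n : ℕ} (h : x % 3 ≠ 0) (hn : 2 ∣ n) : x ^ n % 3 = 1 := by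
  obtain ⟨k, rfl⟩ := hn
  rw [pow_mul, Nat.pow_mod, Nat.pow_mod x]
  have : x % 3 = 1 ∨ x % 3 = 2 := by omega
  rcases this with h | h <;> rw [h] <;> norm_num

lemma pow_mod_nine {x n : ℕ} (h : x % 3 ≠ 0) (hn : 6 ∣ n) : x ^ n % 9 = 1 := by
  obtain ⟨k, rfl⟩ := hn
  rw [pow_mul, Nat.pow_mod, Nat.pow_mod x]
  have : x % 9 = 1 ∨ x % 9 = 2 ∨ x % 9 = 4 ∨ x % 9 = 5 ∨ x % 9 = 7 ∨ x % 9 = 8 := by omega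
  rcases this with h | h | h | h | h | h <;> rw [h] <;> norm_num

lemma cube_mod_nine (x : ℕ) : x ^ 3 % 9 = 0 ∨ x ^ 3 % 9 = 1 ∨ x ^ 3 % 9 = 8 := by
  rw [Nat.pow_mod]
  have : x % 9 < 9 := Nat.mod_lt _ (by norm_num)
  interval_cases x % 9 <;> norm_num

lemma pow_mod_eight {x n : ℕ} (h : x % 2 ≠ 0) (hn : 2 ∣ n) : x ^ n % 8 = 1 := by
  obtain ⟨k, rfl⟩ := hn
  rw [pow_mul, Nat.pow_mod, Nat.pow_mod x]
  have : x % 8 = 1 ∨ x % 8 = 3 ∨ x % 8 = 5 ∨ x % 8 = 7 := by omega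
  rcases this with h | h | h | h <;> rw [h] <;> norm_num

/-- The difference of squares `(i¹²)² - (P⁶)²` splits into coprime factors, which presents `i¹²` as a
sum of two nonzero cubes, against Fermat's last theorem for the exponent `3`. -/
lemma chain5 {i P j : ℕ} (hj : j ≠ 0) (hi : i ≠ 0) (hc : P.Coprime i)
    (h : i ^ 24 = P ^ 12 + 4 * (2 ^ 6 * (3 ^ 15 * j ^ 24))) : False := by
  obtain ⟨m, n, hmn, h1, h2, -⟩ := half_split (a := P ^ 6) (c := i ^ 12)
    ((hc.pow_left 6).pow_right 12) (by rw [← pow_mul, ← pow_mul]; exact h)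
  obtain ⟨k, l, hkl, hs⟩ := split (by norm_num) hmn h1
  have hk : k ≠ 0 := by rintro rfl; simp at hkl; exact hj hkl.symm
  have hl : l ≠ 0 := by rintro rfl; simp at hkl; exact hj hkl.symm
  have hs' : i ^ 12 = k ^ 24 + 2 ^ 6 * (3 ^ 15 * l ^ 24) ∨
      i ^ 12 = 2 ^ 6 * k ^ 24 + 3 ^ 15 * l ^ 24 := by
    rcases hs with ⟨h3, h4⟩ | ⟨h3, h4⟩ | ⟨h3, h4⟩ | ⟨h3, h4⟩ <;> rw [← h2, h3, h4] <;> simp [add_comm]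
  rcases hs' with hs | hs
  · exact fermatLastTheoremThree (k ^ 8) (4 * 3 ^ 5 * l ^ 8) (i ^ 4) (pow_ne_zero _ hk)
      (by positivity) (pow_ne_zero _ hi) (by linear_combination -hs)
  · exact fermatLastTheoremThree (4 * k ^ 8) (3 ^ 5 * l ^ 8) (i ^ 4) (by positivity)
      (by positivity) (pow_ne_zero _ hi) (by linear_combination -hs)

/-- The difference of squares `(y³)² - (P¹²)²` splits into coprime factors; congruences modulo `3`
and `8` leave only the splitting treated in `chain5`. -/
lemma chain4 {y P q : ℕ} (hq : q ≠ 0) (hc : P.Coprime y)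
    (h : y ^ 6 = P ^ 24 + 4 * (2 ^ 8 * (3 ^ 15 * q ^ 24))) : False := by
  obtain ⟨m, n, hmn, h1, h2, h3⟩ := half_split (a := P ^ 12) (c := y ^ 3)
    ((hc.pow_left 12).pow_right 3) (by rw [← pow_mul, ← pow_mul]; exact h)
  have hP : P % 3 = 0 ∨ P ^ 12 % 3 = 1 := by
    by_cases h : P % 3 = 0
    · exact Or.inl h
    · exact Or.inr (pow_mod_three h (by norm_num))
  have hP' : P ^ 12 % 3 = 0 ∨ P ^ 12 % 3 = 1 := hP.imp_left fun h => by simp [Nat.pow_mod, h]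
  obtain ⟨u, v, huv, hs⟩ := split (by norm_num) hmn h1
  rcases hs with ⟨rfl, rfl⟩ | ⟨rfl, rfl⟩ | ⟨rfl, rfl⟩ | ⟨rfl, rfl⟩
  · have h4 : u ^ 24 % 3 = 1 := pow_mod_three (mod_of_coprime Nat.prime_three (by norm_num) hmn
      ⟨2 ^ 8 * (3 ^ 14 * v ^ 24), by ring⟩) (by norm_num)
    omega
  · have hv : v ≠ 0 := by rintro rfl; simp at huv; exact hq huv.symm
    have hu : u ≠ 0 := by rintro rfl; simp at huv; exact hq huv.symm
    refine chain5 hv hu ?_ (P := P) (by rw [h3]; ring)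
    have h4 : (u ^ 24).Coprime (P ^ 12) := by
      have := hmn.symm
      rw [h3] at this ⊢
      simpa [Nat.coprime_comm] using this
    exact (Nat.coprime_pow_left_iff (by norm_num) _ _).1
      ((Nat.coprime_pow_right_iff (by norm_num) _ _).1 h4) |>.symm
  · have h4 : u ^ 24 % 3 = 1 := pow_mod_three (mod_of_coprime Nat.prime_three (by norm_num)
      hmn.coprime_mul_left ⟨3 ^ 14 * v ^ 24, by ring⟩) (by norm_num)
    omega
  · have h4 : v ^ 24 % 8 = 1 := pow_mod_eight (mod_of_coprime Nat.prime_two (by norm_num)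
      hmn.coprime_mul_left ⟨2 ^ 7 * u ^ 24, by ring⟩) (by norm_num)
    have h5 : P ^ 12 % 8 = 0 ∨ P ^ 12 % 8 = 1 := by
      by_cases h : P % 2 = 0
      · left
        obtain ⟨k, rfl⟩ := Nat.dvd_of_mod_eq_zero h
        rw [mul_pow]; omega
      · exact Or.inr (pow_mod_eight h (by norm_num))
    omega

/-- The difference of squares `(y⁶)² - s²` splits into coprime factors; the splitting which is not
treated in `chain4` would make `± 2` a cube modulo `9`. -/
lemma chain3 {s x y : ℕ} (hx : x ≠ 0) (hc : s.Coprime y)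
    (h : y ^ 12 = s ^ 2 + 4 * (2 ^ 10 * (3 ^ 15 * x ^ 24))) : False := by
  obtain ⟨m, n, hmn, h1, h2, h3⟩ := half_split (a := s) (c := y ^ 6)
    (hc.pow_right 6) (by rw [← pow_mul]; exact h)
  obtain ⟨u, v, huv, hs⟩ := split (by norm_num) hmn h1
  have hv : v ≠ 0 := by rintro rfl; simp at huv; exact hx huv.symm
  have hs' : (y ^ 6 = u ^ 24 + 2 ^ 10 * (3 ^ 15 * v ^ 24) ∧
        (u ^ 24).Coprime (2 ^ 10 * (3 ^ 15 * v ^ 24))) ∨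
      (y ^ 6 = 2 ^ 10 * u ^ 24 + 3 ^ 15 * v ^ 24 ∧ (2 ^ 10 * u ^ 24).Coprime (3 ^ 15 * v ^ 24)) := by
    rcases hs with ⟨h3, h4⟩ | ⟨h3, h4⟩ | ⟨h3, h4⟩ | ⟨h3, h4⟩
    · exact Or.inl ⟨by rw [← h2, h3, h4], h3 ▸ h4 ▸ hmn⟩
    · exact Or.inl ⟨by rw [← h2, h3, h4, add_comm], h3 ▸ h4 ▸ hmn.symm⟩
    · exact Or.inr ⟨by rw [← h2, h3, h4], h3 ▸ h4 ▸ hmn⟩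
    · exact Or.inr ⟨by rw [← h2, h3, h4, add_comm], h3 ▸ h4 ▸ hmn.symm⟩
  rcases hs' with ⟨h4, h5⟩ | ⟨h4, h5⟩
  · refine chain4 hv ?_ (P := u) (y := y) (by rw [h4]; ring)
    have h6 : (u ^ 24).Coprime (y ^ 6) := by
      rw [h4]; simpa using h5
    exact (Nat.coprime_pow_left_iff (by norm_num) _ _).1
      ((Nat.coprime_pow_right_iff (by norm_num) _ _).1 h6)
  · have h6 : u ^ 24 % 9 = 1 := pow_mod_nine (mod_of_coprime Nat.prime_three (by norm_num)
      h5.coprime_mul_left ⟨3 ^ 14 * v ^ 24, by ring⟩) (by norm_num)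
    have h7 := cube_mod_nine (y ^ 2)
    rw [← pow_mul, show 2 * 3 = 6 from rfl] at h7
    omega

/-- The difference of cubes `g³ - (u⁴)³` splits as `9 d E` with `d` and `E` coprime and `E` prime to
`6`; so `E` is a twelfth power, and completing the square in `E` leads to `chain3`. -/
lemma chain2 {g u v : ℕ} (hv : v ≠ 0) (hc : (u ^ 12).Coprime (2 ^ 7 * (3 ^ 9 * v ^ 12)))
    (h : g ^ 3 = u ^ 12 + 2 ^ 7 * (3 ^ 9 * v ^ 12)) : False := by
  have hug : u ^ 4 ≤ g := by
    by_contra! h1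
    have := Nat.pow_lt_pow_left h1 (n := 3) (by norm_num)
    rw [← pow_mul, show 4 * 3 = 12 from rfl] at this
    omega
  obtain ⟨d, rfl⟩ := Nat.exists_eq_add_of_le hug
  have h1 : d * (d ^ 2 + 3 * d * u ^ 4 + 3 * u ^ 8) = 2 ^ 7 * (3 ^ 9 * v ^ 12) := by nlinarith
  obtain ⟨d, rfl⟩ : 3 ∣ d := by
    have h2 : 3 ∣ d * (d ^ 2 + 3 * d * u ^ 4 + 3 * u ^ 8) := by
      rw [h1]; exact ⟨2 ^ 7 * (3 ^ 8 * v ^ 12), by ring⟩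
    rcases Nat.prime_three.dvd_mul.1 h2 with h2 | h2
    · exact h2
    · rw [add_assoc, Nat.dvd_add_left ⟨d * u ^ 4 + u ^ 8, by ring⟩] at h2
      exact Nat.prime_three.dvd_of_dvd_pow h2
  obtain ⟨E, hE⟩ : ∃ E, E = 3 * d ^ 2 + 3 * d * u ^ 4 + u ^ 8 := ⟨_, rfl⟩
  have h2 : d * E = 2 ^ 7 * (3 ^ 7 * v ^ 12) := by rw [hE]; nlinarith
  have hcop : d.Coprime E := by
    refine Nat.coprime_of_dvd fun p hp h3 h4 => ?_
    have h5 : p ∣ u ^ 8 := by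
      rw [hE] at h4
      exact (Nat.dvd_add_right (((h3.pow two_ne_zero).mul_left 3).add
        ((h3.mul_left 3).mul_right _))).1 h4
    have h6 : p ∣ 2 ^ 7 * (3 ^ 9 * v ^ 12) := by
      rw [← h1]; exact (h3.mul_left 3).mul_right _
    exact Nat.not_coprime_of_dvd_of_dvd hp.one_lt
      (dvd_pow (hp.dvd_of_dvd_pow h5) (by norm_num)) h6 hc
  have hu2 := mod_of_coprime Nat.prime_two (by norm_num) hc ⟨2 ^ 6 * (3 ^ 9 * v ^ 12), by ring⟩
  have hu3 := mod_of_coprime Nat.prime_three (by norm_num) hc ⟨2 ^ 7 * (3 ^ 8 * v ^ 12), by ring⟩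
  have hE2 : E % 2 ≠ 0 := by
    have h3 : u ^ 8 % 8 = 1 := pow_mod_eight hu2 (by norm_num)
    have h4 : u ^ 4 % 8 = 1 := pow_mod_eight hu2 (by norm_num)
    have h5 : Even (d * (d + 1)) := Nat.even_mul_succ_self d
    have h6 : E + 3 * d * 1 = 3 * (d * (d + 1)) + 3 * d * u ^ 4 + u ^ 8 := by rw [hE]; ring
    have h7 : u ^ 4 = 8 * (u ^ 4 / 8) + 1 := by omega
    rw [h7] at h6
    obtain ⟨t, ht⟩ := h5
    have h8 : E = 2 * (3 * t + 12 * d * (u ^ 4 / 8)) + u ^ 8 := by rw [ht] at h6; nlinarith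
    omega
  have hE3 : E % 3 ≠ 0 := by
    have h3 : u ^ 8 % 3 = 1 := pow_mod_three hu3 (by norm_num)
    have h6 : E = 3 * (d ^ 2 + d * u ^ 4) + u ^ 8 := by rw [hE]; ring
    omega
  obtain ⟨y, x, hxy, hs⟩ := split (by norm_num) hcop h2
  have hx : x ≠ 0 := by rintro rfl; simp at hxy; exact hv hxy.symm
  rcases hs with ⟨-, h3⟩ | ⟨h3, h4⟩ | ⟨-, h3⟩ | ⟨h3, -⟩
  · omega
  · refine chain3 (s := u ^ 4 + 3 * (2 ^ 6 * (3 ^ 7 * x ^ 12))) (x := x) (y := y) hx ?_ ?_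
    · refine Nat.coprime_of_dvd fun p hp h5 h6 => ?_
      have h7 : p ∣ E := h3 ▸ dvd_pow h6 (by norm_num)
      have h8 : p ∣ d := by
        have h9 : E = (u ^ 4 + 3 * (2 ^ 6 * (3 ^ 7 * x ^ 12))) ^ 2 +
          2 ^ 5 * (3 ^ 8 * x ^ 12) * d := by rw [hE, h4]; ring
        have h10 : p ∣ 2 ^ 5 * (3 ^ 8 * x ^ 12) * d := by
          rw [h9] at h7
          exact (Nat.dvd_add_right (h5.pow two_ne_zero)).1 h7
        rcases hp.dvd_mul.1 h10 with h11 | h11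
        · have h12 : p ∣ 2 ^ 5 * (3 ^ 8 * x ^ 12) * (2 ^ 2 * 3 ^ 7) := h11.mul_right _
          have h13 : p ∣ 3 ^ 8 * d := by
            rw [h4]; convert h12 using 1; ring
          rcases hp.dvd_mul.1 h13 with h14 | h14
          · have := (Nat.prime_dvd_prime_iff_eq hp Nat.prime_three).1 (hp.dvd_of_dvd_pow h14)
            subst this
            exact absurd (Nat.mod_eq_zero_of_dvd h7) hE3
          · exact h14
        · exact h11
      exact Nat.not_coprime_of_dvd_of_dvd hp.one_lt h8 h7 hcop
    · rw [← h3, hE, h4]; ring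
  · omega
  · omega

/-- The difference of squares `(g³)² - a²` splits into coprime factors; the splitting which is not
treated in `chain2` would make `± 2` a cube modulo `9`. -/
lemma chain1 {a g β : ℕ} (hβ : β ≠ 0) (hc : a.Coprime g)
    (h : g ^ 6 = a ^ 2 + 4 * (2 ^ 7 * (3 ^ 9 * β ^ 12))) : False := by
  obtain ⟨m, n, hmn, h1, h2, h3⟩ := half_split (a := a) (c := g ^ 3)
    (hc.pow_right 3) (by rw [← pow_mul]; exact h)
  obtain ⟨u, v, huv, hs⟩ := split (by norm_num) hmn h1
  have hv : v ≠ 0 := by rintro rfl; simp at huv; exact hβ huv.symm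
  have hs' : (g ^ 3 = u ^ 12 + 2 ^ 7 * (3 ^ 9 * v ^ 12) ∧
        (u ^ 12).Coprime (2 ^ 7 * (3 ^ 9 * v ^ 12))) ∨
      (g ^ 3 = 2 ^ 7 * u ^ 12 + 3 ^ 9 * v ^ 12 ∧ (2 ^ 7 * u ^ 12).Coprime (3 ^ 9 * v ^ 12)) := by
    rcases hs with ⟨h3, h4⟩ | ⟨h3, h4⟩ | ⟨h3, h4⟩ | ⟨h3, h4⟩
    · exact Or.inl ⟨by rw [← h2, h3, h4], h3 ▸ h4 ▸ hmn⟩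
    · exact Or.inl ⟨by rw [← h2, h3, h4, add_comm], h3 ▸ h4 ▸ hmn.symm⟩
    · exact Or.inr ⟨by rw [← h2, h3, h4], h3 ▸ h4 ▸ hmn⟩
    · exact Or.inr ⟨by rw [← h2, h3, h4, add_comm], h3 ▸ h4 ▸ hmn.symm⟩
  rcases hs' with ⟨h4, h5⟩ | ⟨h4, h5⟩
  · exact chain2 hv h5 h4
  · have h6 : u ^ 12 % 9 = 1 := pow_mod_nine (mod_of_coprime Nat.prime_three (by norm_num)
      h5.coprime_mul_left ⟨3 ^ 8 * v ^ 12, by ring⟩) (by norm_num)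
    have h7 := cube_mod_nine g
    omega

/-! ### The second case: `n⁴ + 64 n² μ⁶ + 512 μ¹² = p³` -/

/-- If `3 ∤ b` both factors are sixth powers, against `3 a² ≡ 3` modulo `8`. If `3 ∣ b`, removing the
powers of `3` leaves an equation `g⁶ = a² + 2⁹ 3⁹ β¹²`, the start of the chain. -/
lemma caseB_zero {a b μ : ℕ} (ha : a % 2 ≠ 0) (hμ : μ ≠ 0) (hc : a.Coprime b)
    (h : b * (3 * a ^ 2 + 512 * b ^ 2) = μ ^ 6) : False := by
  by_cases hb : 3 ∣ b
  · obtain ⟨c, rfl⟩ := hb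
    have hν : 3 ∣ μ := Nat.prime_three.dvd_of_dvd_pow (n := 6)
      ⟨c * (3 * a ^ 2 + 512 * (3 * c) ^ 2), by rw [← h]; ring⟩
    obtain ⟨ν, rfl⟩ := hν
    have ha3 : a % 3 ≠ 0 := by
      have := mod_of_coprime (q := 3) (x := a) (k := 1) Nat.prime_three one_ne_zero
        (by rw [pow_one]; exact hc) ⟨c, rfl⟩
      exact this
    have hc1 : a.Coprime c := hc.coprime_mul_left_right
    have h1 : c * (a ^ 2 + 1536 * c ^ 2) = 3 ^ 4 * ν ^ 6 := by nlinarith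
    have hc2 : c.Coprime (a ^ 2 + 1536 * c ^ 2) := by
      rw [show 1536 * c ^ 2 = c * (1536 * c) by ring, Nat.coprime_add_mul_left_right]
      exact hc1.symm.pow_right 2
    rcases split_prime Nat.prime_three hc2 h1 with ⟨d, rfl, h2⟩ | ⟨n', h2, -⟩
    · have hc3 := hc2.coprime_mul_left
      obtain ⟨β, g, hβ, rfl, hg⟩ := split_pow (by norm_num) hc3 h2
      refine chain1 (a := a) (g := g) (β := β) ?_ ?_ (by rw [← hg]; ring)
      · rintro rfl; simp at hβ; omega
      · have hcβ : a.Coprime (β ^ 6) := hc1.coprime_mul_left_right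
        have h5 : a.Coprime (1536 * (3 ^ 4 * β ^ 6) ^ 2) := by
          have h3 : a.Coprime 3 := ((Nat.Prime.coprime_iff_not_dvd Nat.prime_three).2
            fun h => ha3 (Nat.mod_eq_zero_of_dvd h)).symm
          have h2 : a.Coprime 2 := ((Nat.Prime.coprime_iff_not_dvd Nat.prime_two).2
            fun h => ha (Nat.mod_eq_zero_of_dvd h)).symm
          rw [show 1536 = 2 ^ 9 * 3 by norm_num]
          exact ((h2.pow_right 9).mul_right h3).mul_right (hc1.pow_right 2)
        have h6 : a.Coprime (g ^ 6) := by
          rw [← hg, show a ^ 2 = a * a by ring, Nat.coprime_mul_right_add_right]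
          exact h5
        exact (Nat.coprime_pow_right_iff (by norm_num) _ _).1 h6
    · have h3 : a ^ 2 % 3 = 1 := pow_mod_three ha3 (by norm_num)
      omega
  · have hcb : b.Coprime (3 * a ^ 2 + 512 * b ^ 2) := by
      rw [show 512 * b ^ 2 = b * (512 * b) by ring, Nat.coprime_add_mul_left_right]
      exact ((Nat.Prime.coprime_iff_not_dvd Nat.prime_three).2 hb).symm.mul_right
        (hc.symm.pow_right 2)
    obtain ⟨u, g, -, -, hg⟩ := split_pow (by norm_num) hcb h
    have h3 : a ^ 2 % 8 = 1 := pow_mod_eight ha (by norm_num)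
    have h4 : g % 2 ≠ 0 := by
      intro h4
      obtain ⟨k, rfl⟩ := Nat.dvd_of_mod_eq_zero h4
      rw [mul_pow] at hg
      omega
    have h5 : g ^ 6 % 8 = 1 := pow_mod_eight h4 (by norm_num)
    omega

/-- The case `k = 0` of `caseB`, with `h1` and `h2` the coordinates of the cube of `a + b √2`. -/
lemma caseB_cube {a b n μ : ℤ} (hno : Odd n) (hc : IsCoprime n μ) (hμ : μ ≠ 0)
    (h1 : n ^ 2 + 32 * μ ^ 6 = a * (a ^ 2 + 6 * b ^ 2))
    (h2 : 16 * μ ^ 6 = b * (3 * a ^ 2 + 2 * b ^ 2)) : False := by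
  have hn0 : n ≠ 0 := by rintro rfl; revert hno; decide
  have hao : Odd a := (Int.odd_mul.1 (h1 ▸ hno.pow.add_even ⟨16 * μ ^ 6, by ring⟩)).1
  have ha : 0 < a := by
    have h3 : 0 < a * (a ^ 2 + 6 * b ^ 2) := by rw [← h1]; positivity
    exact pos_of_mul_pos_left h3 (by positivity)
  have hb : 0 < b := by
    have h3 : 0 < b * (3 * a ^ 2 + 2 * b ^ 2) := by rw [← h2]; positivity
    exact pos_of_mul_pos_left h3 (by positivity)
  have hodd : Odd (3 * a ^ 2 + 2 * b ^ 2) :=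
    (Odd.mul (by decide) hao.pow).add_even ⟨b ^ 2, by ring⟩
  have h16 : (16 : ℤ) ∣ b := by
    have h3 : IsCoprime (16 : ℤ) (3 * a ^ 2 + 2 * b ^ 2) := by
      have := (Int.isCoprime_two_left.2 hodd).pow_left (m := 4)
      norm_num at this
      exact this
    exact h3.dvd_of_dvd_mul_right ⟨μ ^ 6, h2.symm⟩
  have hab : IsCoprime a b := by
    refine isCoprime_of_prime_dvd (fun h0 => ha.ne' h0.1) fun q hq hqa hqb => ?_
    have h3 : q ∣ 2 ^ 4 * μ ^ 6 := by
      rw [show (2 : ℤ) ^ 4 = 16 by norm_num, h2]; exact hqb.mul_right _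
    have h4 : q ∣ n := by
      refine hq.dvd_of_dvd_pow (n := 2) ?_
      rw [show n ^ 2 = a * (a ^ 2 + 6 * b ^ 2) - 2 * (2 ^ 4 * μ ^ 6) by linear_combination h1]
      exact (hqa.mul_right _).sub (h3.mul_left 2)
    exact hq.not_isUnit ((odd_pow_coprime 4 hc.pow_right hno).isUnit_of_dvd' h4 h3)
  obtain ⟨b, rfl⟩ := h16
  have h5 : b * (3 * a ^ 2 + 512 * b ^ 2) = μ ^ 6 := by linarith
  have hb' : 0 < b := by linarith
  lift a to ℕ using ha.le
  lift b to ℕ using hb'.le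
  refine caseB_zero (a := a) (b := b) (μ := μ.natAbs) ?_ (Int.natAbs_ne_zero.2 hμ)
    (Int.isCoprime_iff_nat_coprime.1 hab.of_mul_right_right) ?_
  · have : Odd a := by exact_mod_cast hao
    rw [Nat.odd_iff] at this
    omega
  · zify
    rw [Even.pow_abs (by decide), ← h5]

lemma not_sq_of_mod_eight {x y : ℤ} (h : x = y ^ 2) : x % 8 ≠ 5 ∧ x % 8 ≠ 7 := by
  have h1 : y % 8 = 0 ∨ y % 8 = 1 ∨ y % 8 = 2 ∨ y % 8 = 3 ∨ y % 8 = 4 ∨ y % 8 = 5 ∨ y % 8 = 6 ∨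
    y % 8 = 7 := by omega
  have h2 : x % 8 = (y % 8) * (y % 8) % 8 := by rw [h, sq, Int.mul_emod]
  rcases h1 with h1 | h1 | h1 | h1 | h1 | h1 | h1 | h1 <;> rw [h1] at h2 <;> omega

lemma int_sq_mod_eight {x : ℤ} (h : Odd x) : x ^ 2 % 8 = 1 := by
  obtain ⟨k, rfl⟩ := h
  obtain ⟨t, ht⟩ := Int.even_mul_succ_self k
  have : (2 * k + 1) ^ 2 = 8 * t + 1 := by nlinarith
  omega

/-- The case `k = 1` of `caseB`: since `gcd (a, a² + 6b²)` divides `3`, one of `a² + 6b²` and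
`(a² + 6b²) / 3` would be a square, but they are `7` and `5` modulo `8`. -/
lemma caseB_one {a b n : ℤ} (ha : Odd a) (hb : Odd b) (hc : IsCoprime a b)
    (h : n ^ 2 = -(a * (a ^ 2 + 6 * b ^ 2))) : False := by
  have ha2 := int_sq_mod_eight ha
  have hb2 := int_sq_mod_eight hb
  by_cases h3 : 3 ∣ a
  · obtain ⟨c, rfl⟩ := h3
    have hn : 3 ∣ n := Int.prime_three.dvd_of_dvd_pow (n := 2) ⟨-(c * ((3 * c) ^ 2 + 6 * b ^ 2)), by
      rw [h]; ring⟩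
    obtain ⟨m, rfl⟩ := hn
    have hc1 : IsCoprime c b := hc.of_mul_left_right
    have hc3 : IsCoprime (3 : ℤ) b := hc.of_mul_left_left
    have h1 : (3 * c ^ 2 + 2 * b ^ 2) * (-c) = m ^ 2 := by nlinarith
    have hco : Odd c := (Int.odd_mul.1 ha).2
    have hc2 := int_sq_mod_eight hco
    have h2 : IsCoprime (3 * c ^ 2 + 2 * b ^ 2) (-c) := by
      rw [IsCoprime.neg_right_iff, show 3 * c ^ 2 + 2 * b ^ 2 = 2 * b ^ 2 + c * (3 * c) by ring,
        IsCoprime.add_mul_left_left_iff]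
      exact (Int.isCoprime_two_left.2 hco).mul_left hc1.symm.pow_left
    obtain ⟨y, hy | hy⟩ := Int.sq_of_isCoprime h2 h1
    · have := not_sq_of_mod_eight hy
      omega
    · have := sq_nonneg y
      have := sq_nonneg b
      have := sq_nonneg c
      omega
  · have h1 : (a ^ 2 + 6 * b ^ 2) * (-a) = n ^ 2 := by rw [h]; ring
    have h2 : IsCoprime (a ^ 2 + 6 * b ^ 2) (-a) := by
      rw [IsCoprime.neg_right_iff, show a ^ 2 + 6 * b ^ 2 = 6 * b ^ 2 + a * a by ring,
        IsCoprime.add_mul_left_left_iff, show (6 : ℤ) = 2 * 3 by norm_num]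
      refine (IsCoprime.mul_left ?_ ?_).mul_left hc.symm.pow_left
      · exact Int.isCoprime_two_left.2 ha
      · exact (Int.prime_three.coprime_iff_not_dvd).2 h3
    obtain ⟨y, hy | hy⟩ := Int.sq_of_isCoprime h2 h1
    · have := not_sq_of_mod_eight hy
      omega
    · have := sq_nonneg y
      have := sq_nonneg b
      have := sq_nonneg a
      omega

/-- The equation attached to a denominator `m = 4μ³` of `y / x`, with numerator `n`. Its left side is
the norm of `n² + 32μ⁶ + 16μ⁶√2`, which is therefore `ε ^ k` times a cube. For `k = 2` the number
`n² + (8μ³)²` has a positive divisor prime to `n` and congruent to `3` modulo `4`, which is absurd. -/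
lemma caseB {n μ p : ℤ} (hno : Odd n) (hc : IsCoprime n μ) (hμ : μ ≠ 0) :
    n ^ 4 + 64 * n ^ 2 * μ ^ 6 + 512 * μ ^ 12 ≠ p ^ 3 := by
  intro h
  have hn0 : n ≠ 0 := by rintro rfl; revert hno; decide
  have hpo : Odd p := by
    have : Odd (p ^ 3) := by
      rw [← h]
      exact (hno.pow.add_even ⟨32 * n ^ 2 * μ ^ 6, by ring⟩).add_even ⟨256 * μ ^ 12, by ring⟩
    exact (Int.odd_pow' (by norm_num)).1 this
  have hc2 : IsCoprime n (2 ^ 4 * μ) := odd_pow_coprime 4 hc hno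
  have hxy : IsCoprime (n ^ 2 + 32 * μ ^ 6) (16 * μ ^ 6) := by
    rw [show n ^ 2 + 32 * μ ^ 6 = n ^ 2 + (16 * μ ^ 6) * 2 by ring,
      IsCoprime.add_mul_left_left_iff]
    exact (hc2.of_mul_right_left.mul_right hc.pow_right).pow_left
  rcases norm_cube_coords (x := n ^ 2 + 32 * μ ^ 6) (y := 16 * μ ^ 6) (p := p)
    (by rw [← h]; ring) hpo hxy with ⟨w, hw⟩ | ⟨a, b, A, B, hA, hB, h1 | h1⟩
  · have h1 := congrArg Zsqrtd.re hw
    have h2 := congrArg Zsqrtd.im hw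
    obtain ⟨a, ha⟩ : ∃ a, a = w.re := ⟨_, rfl⟩
    obtain ⟨b, hb⟩ : ∃ b, b = w.im := ⟨_, rfl⟩
    simp [θ, pow_succ, ← ha, ← hb] at h1 h2
    have h3 : n ^ 2 + 32 * μ ^ 6 = a * (a ^ 2 + 6 * b ^ 2) := by linear_combination h1
    have h4 : 16 * μ ^ 6 = b * (3 * a ^ 2 + 2 * b ^ 2) := by linear_combination h2
    exact caseB_cube hno hc hμ h3 h4
  · obtain ⟨h1, h2⟩ := h1
    have hA1 : n ^ 2 = -(a * (a ^ 2 + 6 * b ^ 2)) := by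
      have : n ^ 2 = -A := by linarith
      rw [this, hA]; ring
    have hao : Odd a := by
      by_contra hne
      obtain ⟨k, rfl⟩ := Int.not_odd_iff_even.1 hne
      have : Odd (n ^ 2) := hno.pow
      rw [hA1] at this
      exact (Int.not_odd_iff_even.2 ⟨-(k * ((k + k) ^ 2 + 6 * b ^ 2)), by ring⟩) this
    have hbo : Odd b := by
      by_contra hne
      obtain ⟨k, rfl⟩ := Int.not_odd_iff_even.1 hne
      have : Odd (n ^ 2) := hno.pow
      rw [show n ^ 2 = B - 16 * μ ^ 6 by linarith, hB] at this
      exact (Int.not_odd_iff_even.2 ⟨3 * a ^ 2 * k + (k + k) ^ 3 - 8 * μ ^ 6, by ring⟩) this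
    refine caseB_one hao hbo ?_ hA1
    refine (isCoprime_of_prime_dvd (fun h0 => ?_) fun q hq ha hb => ?_)
    · rw [h0.1] at hao; revert hao; decide
    · refine hq.not_isUnit (hxy.isUnit_of_dvd' ?_ ?_)
      · rw [h1, hA, hB]
        exact (((ha.pow three_ne_zero).add ((ha.mul_left 6).mul_right _)).add
          ((((hb.mul_left _).add ((hb.pow three_ne_zero).mul_left 2))).mul_left 2))
      · rw [h2, hA, hB]
        exact (((ha.pow three_ne_zero).add ((ha.mul_left 6).mul_right _)).add
          (((hb.mul_left _).add ((hb.pow three_ne_zero).mul_left 2))))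
  · obtain ⟨h1, h2⟩ := h1
    have hA1 : n ^ 2 = -A - 2 * B := by linarith
    have hao : Odd a := by
      by_contra hne
      obtain ⟨k, rfl⟩ := Int.not_odd_iff_even.1 hne
      have : Odd (n ^ 2) := hno.pow
      rw [hA1, hA] at this
      exact (Int.not_odd_iff_even.2 ⟨-(4 * k ^ 3 + 6 * k * b ^ 2) - B, by ring⟩) this
    have hbe : Even b := by
      by_contra hne
      have hbo := Int.not_even_iff_odd.1 hne
      have : Odd B := by
        rw [hB]
        exact ((Odd.mul (by decide) hao.pow).mul hbo).add_even ⟨b ^ 3, by ring⟩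
      have h4 : Odd (3 * B) := Odd.mul (by decide) this
      rw [show 3 * B = 16 * μ ^ 6 - 2 * A by linarith] at h4
      exact (Int.not_odd_iff_even.2 ⟨8 * μ ^ 6 - A, by ring⟩) h4
    obtain ⟨c, hcdef⟩ : ∃ c, c = a + 2 * b := ⟨_, rfl⟩
    have hBf : n ^ 2 + 64 * μ ^ 6 = c * (7 * a ^ 2 + 16 * a * b + 10 * b ^ 2) := by
      have : n ^ 2 + 64 * μ ^ 6 = 7 * A + 10 * B := by linarith
      rw [this, hA, hB, hcdef]; ring
    have hco : Odd c := by rw [hcdef]; exact hao.add_even ⟨b, by ring⟩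
    have hb : 0 < c := by
      have h3 : 0 < c * (7 * a ^ 2 + 16 * a * b + 10 * b ^ 2) := by rw [← hBf]; positivity
      exact pos_of_mul_pos_left h3 (by nlinarith [sq_nonneg (7 * a + 8 * b), sq_nonneg b])
    obtain ⟨h4, h5⟩ := coprime_pair (i := 2) (k := 6) (j := 6) hco hc
      ⟨_, by rw [← hBf]; ring⟩ (by norm_num) (by norm_num)
    have h6 := mod_four_of_jacobi hb hco (jacobi_eq_one (D := -1) (x := n) (y := (2 * μ) ^ 3) hb
      h4 h5.pow_left ⟨_, by rw [← hBf]; ring⟩)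
    obtain ⟨k, rfl⟩ := hno
    obtain ⟨l, rfl⟩ := hao
    obtain ⟨m, rfl⟩ := hbe
    rw [hA, hB] at hA1
    rw [hcdef] at h6
    have h7 := congrArg (Int.cast : ℤ → ZMod 4) hA1
    push_cast at h7 h6
    revert h6 h7
    generalize (m : ZMod 4) = m'
    generalize (k : ZMod 4) = k'
    generalize (l : ZMod 4) = l'
    clear * -
    revert k' l' m'
    decide +kernel

/-! ### Reduction of the quartic to the two cases -/

lemma cube_eq_fourth {m q : ℕ} (h : q ^ 3 = m ^ 4) : ∃ t, m = t ^ 3 ∧ q = t ^ 4 := by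
  rcases Nat.eq_zero_or_pos q with rfl | hq
  · have : m = 0 := by
      have h1 : m ^ 4 = 0 := by rw [← h]; norm_num
      exact pow_eq_zero_iff (by norm_num) |>.1 h1
    exact ⟨0, by simp [this], by simp⟩
  have hmq : m ∣ q := by
    rw [← Nat.pow_dvd_pow_iff (n := 3) (by norm_num)]
    exact ⟨m, by rw [h]; ring⟩
  obtain ⟨t, rfl⟩ := hmq
  have hm : 0 < m := Nat.pos_of_mul_pos_right hq
  have h1 : m = t ^ 3 := by
    have : m ^ 3 * m = m ^ 3 * t ^ 3 := by rw [← mul_pow, h]; ring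
    exact Nat.eq_of_mul_eq_mul_left (by positivity) this
  exact ⟨t, h1, by rw [h1]; ring⟩

lemma cube_eq_two_fourth {m q : ℕ} (h : q ^ 3 = 2 * m ^ 4) : ∃ t, m = 4 * t ^ 3 ∧ q = 8 * t ^ 4 := by
  have h2 : 2 ∣ q := Nat.prime_two.dvd_of_dvd_pow (n := 3) ⟨m ^ 4, h⟩
  obtain ⟨q, rfl⟩ := h2
  have h3 : 2 ∣ m := Nat.prime_two.dvd_of_dvd_pow (n := 4) ⟨2 * q ^ 3, by nlinarith⟩
  obtain ⟨m, rfl⟩ := h3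
  have h4 : 2 ∣ q := Nat.prime_two.dvd_of_dvd_pow (n := 3) ⟨2 * m ^ 4, by nlinarith⟩
  obtain ⟨q, rfl⟩ := h4
  have h5 : 2 ∣ m := Nat.prime_two.dvd_of_dvd_pow (n := 4) ⟨q ^ 3, by nlinarith⟩
  obtain ⟨m, rfl⟩ := h5
  have h6 : 2 ∣ q := Nat.prime_two.dvd_of_dvd_pow (n := 3) ⟨4 * m ^ 4, by nlinarith⟩
  obtain ⟨q, rfl⟩ := h6
  obtain ⟨t, rfl, rfl⟩ := cube_eq_fourth (m := m) (q := q) (by nlinarith)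
  exact ⟨t, by ring, by ring⟩

/-- The equation in the affine coordinates `y / x = n / m` and `z / x = p / q` in lowest terms.
Comparing divisibilities gives `q³ = m⁴` or `q³ = 2m⁴`, which are `caseA` and `caseB`. -/
lemma affine {n p : ℤ} {m q : ℕ} (hm : m ≠ 0) (hq : q ≠ 0) (hn : n ≠ 0)
    (hnm : IsCoprime n m) (hpq : IsCoprime p q)
    (h : 2 * p ^ 3 * m ^ 4 = q ^ 3 * (n ^ 4 + 4 * n ^ 2 * m ^ 2 + 2 * m ^ 4)) : False := by
  have h1 : (m : ℤ) ^ 4 ∣ q ^ 3 := by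
    have : (m : ℤ) ^ 2 ∣ q ^ 3 := by
      have : (m : ℤ) ^ 2 ∣ q ^ 3 * n ^ 4 :=
        ⟨2 * p ^ 3 * m ^ 2 - q ^ 3 * (4 * n ^ 2 + 2 * m ^ 2), by linear_combination -h⟩
      exact hnm.symm.pow.dvd_of_dvd_mul_right this
    obtain ⟨k, hk⟩ := this
    have : (m : ℤ) ^ 4 ∣ q ^ 3 * n ^ 4 :=
      ⟨2 * p ^ 3 - k * 4 * n ^ 2 - q ^ 3 * 2, by linear_combination -h - 4 * n ^ 2 * m ^ 2 * hk⟩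
    exact hnm.symm.pow.dvd_of_dvd_mul_right this
  have h2 : (q : ℤ) ^ 3 ∣ 2 * m ^ 4 := by
    have : (q : ℤ) ^ 3 ∣ p ^ 3 * (2 * m ^ 4) := ⟨_, by rw [← h]; ring⟩
    exact hpq.symm.pow.dvd_of_dvd_mul_left this
  obtain ⟨k, hk⟩ : m ^ 4 ∣ q ^ 3 := by exact_mod_cast h1
  have h3 : q ^ 3 ∣ 2 * m ^ 4 := by exact_mod_cast h2
  have hk2 : k ∣ 2 := by
    rw [hk, mul_comm 2] at h3
    exact Nat.dvd_of_mul_dvd_mul_left (by positivity) h3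
  have hm4 : (m : ℤ) ^ 4 ≠ 0 := by exact_mod_cast pow_ne_zero 4 hm
  rcases (Nat.dvd_prime Nat.prime_two).1 hk2 with rfl | rfl
  · obtain ⟨t, rfl, rfl⟩ := cube_eq_fourth (by rw [hk, mul_one] : q ^ 3 = m ^ 4)
    push_cast at *
    have h4 : 2 * p ^ 3 = n ^ 4 + 4 * n ^ 2 * t ^ 6 + 2 * t ^ 12 := by
      apply mul_right_cancel₀ hm4
      linear_combination h
    obtain ⟨r, rfl⟩ : (2 : ℤ) ∣ n := Int.prime_two.dvd_of_dvd_pow (n := 4)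
      ⟨p ^ 3 - 2 * n ^ 2 * t ^ 6 - t ^ 12, by linear_combination -h4⟩
    have ht : Odd (t : ℤ) := by
      by_contra hne
      exact Int.prime_two.not_isUnit (hnm.isUnit_of_dvd' ⟨r, rfl⟩
        (dvd_pow (Int.not_odd_iff_even.1 hne).two_dvd three_ne_zero))
    refine caseA (t := t) (r := r) (p := p) ht ?_ ?_ ?_ (by linarith)
    · exact ((IsCoprime.pow_right_iff (by norm_num)).1 hnm.of_mul_left_right).symm
    · rintro h0; simp [h0] at hm4
    · rintro rfl; simp at hn
  · obtain ⟨t, rfl, rfl⟩ := cube_eq_two_fourth (by rw [hk, mul_comm] : q ^ 3 = 2 * m ^ 4)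
    push_cast at *
    refine caseB (n := n) (μ := t) (p := p) ?_ ?_ ?_ ?_
    · by_contra hne
      exact Int.prime_two.not_isUnit (hnm.isUnit_of_dvd' (Int.not_odd_iff_even.1 hne).two_dvd
        ⟨2 * t ^ 3, by ring⟩)
    · exact (IsCoprime.pow_right_iff (by norm_num)).1 hnm.of_mul_right_right
    · rintro h0; simp [h0] at hm4
    · apply mul_right_cancel₀ (mul_ne_zero two_ne_zero hm4)
      linear_combination -h

end PlaneQuartic

/-- For rational `x`, `y`, `z` not all zero, one has
`2x⁴ + 4x²y² - 2xz³ + y⁴ = 0` if and only if `y = 0` and (`x = 0` or `x = z`).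
In particular, the only rational points of this plane projective quartic
are `[0 : 0 : 1]` and `[1 : 0 : 1]`. -/
theorem rational_points_of_plane_quartic_two (x y z : ℚ)
    (hne : ¬(x = 0 ∧ y = 0 ∧ z = 0)) :
    2 * x ^ 4 + 4 * x ^ 2 * y ^ 2 - 2 * x * z ^ 3 + y ^ 4 = 0 ↔
      y = 0 ∧ (x = 0 ∨ x = z) := by
  constructor
  · intro h
    have hy : y = 0 := by
      by_contra hy
      have hx : x ≠ 0 := by
        rintro rfl
        exact hy (by simpa using h)
      have h1 : 2 * (z / x) ^ 3 = (y / x) ^ 4 + 4 * (y / x) ^ 2 + 2 := by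
        field_simp
        linear_combination -h
      have hY : y / x ≠ 0 := div_ne_zero hy hx
      generalize z / x = Z at h1
      generalize y / x = Y at h1 hY
      refine PlaneQuartic.affine (n := Y.num) (p := Z.num) Y.den_nz Z.den_nz (Rat.num_ne_zero.2 hY)
        (Int.isCoprime_iff_nat_coprime.2 (by simpa using Y.reduced))
        (Int.isCoprime_iff_nat_coprime.2 (by simpa using Z.reduced)) ?_
      have hYd : (Y.den : ℚ) ≠ 0 := by exact_mod_cast Y.den_nz
      have hZd : (Z.den : ℚ) ≠ 0 := by exact_mod_cast Z.den_nz
      have : (2 * Z.num ^ 3 * Y.den ^ 4 : ℚ) =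
          Z.den ^ 3 * (Y.num ^ 4 + 4 * Y.num ^ 2 * Y.den ^ 2 + 2 * Y.den ^ 4) := by
        rw [← Rat.num_div_den Z, ← Rat.num_div_den Y] at h1
        field_simp at h1
        linear_combination h1
      exact_mod_cast this
    subst hy
    refine ⟨rfl, ?_⟩
    have h1 : x * (x ^ 3 - z ^ 3) = 0 := by linear_combination h / 2
    rcases mul_eq_zero.1 h1 with h1 | h1
    · exact Or.inl h1
    · exact Or.inr ((Odd.strictMono_pow (by decide : Odd 3)).injective (sub_eq_zero.1 h1))
  · rintro ⟨rfl, rfl | rfl⟩ <;> ring
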